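/- arXiv:2012.05755 — 3 statements merged into one kernel-verified Lean document; each statement's English description precedes it below -/
import Mathlib

section
/- Let r:[0,1]→[0,∞) be absolutely continuous with r'(R)>0 a.e. and r(R)>0 for R∈(0,1]. Define u(ρ)=r(ρ^{1/3})³ for ρ∈(0,1]. Then u is absolutely continuous on compact subintervals of (0,1] with u'(ρ)=δ_r(ρ^{1/3}) for a.e. ρ∈(0,1), and for every measurable g:(0,∞)→[0,∞] one has ∫₀¹ g(u'(ρ)) dρ = 3∫₀¹ g(δ_r(R)) R² dR (equality in [0,∞]). -/
open MeasureTheory Real Set Filter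
open scoped ENNReal

/-- `δ_r(R) = r'(R) (r(R)/R)²`. -/
noncomputable def deltaR (r r' : ℝ → ℝ) (R : ℝ) : ℝ := r' R * (r R / R) ^ 2

/-! The function `u(ρ) = r(ρ^{1/n})ⁿ` is a power of `r` precomposed with the root, and the root is
monotone and absolutely continuous up to `0`, so `u` is absolutely continuous. As `R ↦ Rⁿ` maps null
sets to null sets, its derivative is given almost everywhere by the chain rule, in which the factor
`(1/n) R^{1-n}` from the root cancels the `n` from the outer power and turns `r(R)ⁿ⁻¹` into
`(r(R)/R)ⁿ⁻¹`. The integral identity is the substitution `ρ = Rⁿ`. -/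

section AbsolutelyContinuous

variable {X : Type*} [PseudoMetricSpace X] {a b : ℝ}

lemma absolutelyContinuousOnInterval_congr {f g : ℝ → X}
    (hf : AbsolutelyContinuousOnInterval f a b) (hfg : EqOn f g (uIcc a b)) :
    AbsolutelyContinuousOnInterval g a b := by
  refine Tendsto.congr' ?_ hf
  filter_upwards [mem_inf_of_right (mem_principal_self _)] with E hE
  exact Finset.sum_congr rfl fun i hi => by rw [hfg (hE.1 i hi).1, hfg (hE.1 i hi).2]

lemma disjoint_uIoc_of_monotoneOn {α β : Type*} [LinearOrder α] [LinearOrder β] {φ : α → β}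
    {s : Set α} (hφ : MonotoneOn φ s) {x y x' y' : α}
    (hx : x ∈ s) (hy : y ∈ s) (hx' : x' ∈ s) (hy' : y' ∈ s)
    (h : Disjoint (uIoc x y) (uIoc x' y')) :
    Disjoint (uIoc (φ x) (φ y)) (uIoc (φ x') (φ y')) := by
  have mem_max {u v : α} (hu : u ∈ s) (hv : v ∈ s) : max u v ∈ s := by grind
  have mem_min {u v : α} (hu : u ∈ s) (hv : v ∈ s) : min u v ∈ s := by grind
  simp only [uIoc, Ioc_disjoint_Ioc, ← hφ.map_max, ← hφ.map_min, *] at h ⊢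
  exact hφ (by grind) (by grind) h

lemma absolutelyContinuousOnInterval_comp_monotoneOn {f : ℝ → X} {φ : ℝ → ℝ}
    (hf : AbsolutelyContinuousOnInterval f (φ a) (φ b))
    (hφ : AbsolutelyContinuousOnInterval φ a b) (hmono : MonotoneOn φ (uIcc a b)) :
    AbsolutelyContinuousOnInterval (f ∘ φ) a b := by
  refine Tendsto.comp (y := AbsolutelyContinuousOnInterval.totalLengthFilter ⊓
    𝓟 (AbsolutelyContinuousOnInterval.disjWithin (φ a) (φ b)))
    (f := fun E : ℕ × (ℕ → ℝ × ℝ) => (E.1, fun i => (φ (E.2 i).1, φ (E.2 i).2))) hf ?_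
  -- Absolute continuity of `φ` is exactly the vanishing of the total length of the image intervals.
  refine tendsto_inf.2 ⟨tendsto_comap_iff.2 hφ, tendsto_principal.2 ?_⟩
  filter_upwards [mem_inf_of_right (mem_principal_self _)] with E ⟨hmem, hdisj⟩
  exact ⟨fun i hi => ⟨hmono.mapsTo_uIcc (hmem i hi).1, hmono.mapsTo_uIcc (hmem i hi).2⟩,
    fun i hi j hj hij => disjoint_uIoc_of_monotoneOn hmono (hmem i hi).1 (hmem i hi).2
      (hmem j hj).1 (hmem j hj).2 (hdisj hi hj hij)⟩

lemma absolutelyContinuousOnInterval_const (x : X) (a b : ℝ) :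
    AbsolutelyContinuousOnInterval (fun _ => x) a b :=
  (LipschitzWith.const x).lipschitzOnWith.absolutelyContinuousOnInterval

lemma absolutelyContinuousOnInterval_pow {f : ℝ → ℝ} (hf : AbsolutelyContinuousOnInterval f a b)
    (n : ℕ) : AbsolutelyContinuousOnInterval (f ^ n) a b := by
  induction n with
  | zero => simpa only [pow_zero] using! absolutelyContinuousOnInterval_const (1 : ℝ) a b
  | succ n ih => simpa only [pow_succ] using ih.mul hf

variable {f f' : ℝ → ℝ}

lemma absolutelyContinuousOnInterval_of_eq_add_integral {c : ℝ}
    (hf' : IntervalIntegrable f' volume a b)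
    (hf : ∀ x ∈ uIcc a b, f x = c + ∫ t in a..x, f' t) :
    AbsolutelyContinuousOnInterval f a b :=
  absolutelyContinuousOnInterval_congr
    ((absolutelyContinuousOnInterval_const c a b).add
      (hf'.absolutelyContinuousOnInterval_intervalIntegral left_mem_uIcc))
    fun x hx => (hf x hx).symm

lemma absolutelyContinuousOnInterval_rpow {p : ℝ} (hp : 0 < p) (a b : ℝ) :
    AbsolutelyContinuousOnInterval (fun x => x ^ p) a b := by
  refine absolutelyContinuousOnInterval_of_eq_add_integral (c := a ^ p)
    (f' := fun x => p * x ^ (p - 1))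
    ((intervalIntegral.intervalIntegrable_rpow' (by linarith)).const_mul p) fun x _ => ?_
  rw [intervalIntegral.integral_const_mul, integral_rpow (Or.inl (by linarith)), sub_add_cancel]
  field_simp
  ring

lemma ae_hasDerivAt_of_eq_add_integral {c : ℝ} (hf' : IntervalIntegrable f' volume a b)
    (hf : ∀ x ∈ uIcc a b, f x = c + ∫ t in a..x, f' t) :
    ∀ᵐ x ∂volume.restrict (Ioo a b), HasDerivAt f (f' x) x := by
  have hsub : Ioo a b ⊆ uIcc a b := Ioo_subset_Icc_self.trans Icc_subset_uIcc
  rw [ae_restrict_iff' measurableSet_Ioo]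
  filter_upwards [hf'.ae_hasDerivAt_integral] with x hderiv hx
  refine ((hderiv (hsub hx) a left_mem_uIcc).const_add c).congr_of_eventuallyEq ?_
  filter_upwards [isOpen_Ioo.mem_nhds hx] with y hy using hf y (hsub hy)

lemma deriv_ae_eq_of_ae_hasDerivAt (hab : a ≤ b)
    (hderiv : ∀ᵐ x ∂volume.restrict (Ioo a b), HasDerivAt f (f' x) x) :
    deriv f =ᵐ[volume.restrict (uIoc a b)] f' := by
  rw [uIoc_of_le hab, ← Measure.restrict_congr_set Ioo_ae_eq_Ioc]
  exact hderiv.mono fun x hx => hx.deriv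

lemma intervalIntegrable_and_eq_add_integral_of_ae_hasDerivAt
    (hf : AbsolutelyContinuousOnInterval f a b) (hab : a ≤ b)
    (hderiv : ∀ᵐ x ∂volume.restrict (Ioo a b), HasDerivAt f (f' x) x) :
    IntervalIntegrable f' volume a b ∧ ∀ x ∈ Icc a b, f x = f a + ∫ t in a..x, f' t := by
  refine ⟨hf.intervalIntegrable_deriv.congr_ae (deriv_ae_eq_of_ae_hasDerivAt hab hderiv),
    fun x hx => ?_⟩
  have hf_ax : AbsolutelyContinuousOnInterval f a x :=
    hf.mono (uIcc_subset_uIcc_left (Icc_subset_uIcc hx))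
  have hderiv_ax := ae_restrict_of_ae_restrict_of_subset (Ioo_subset_Ioo_right hx.2) hderiv
  rw [← intervalIntegral.integral_congr_ae_restrict (deriv_ae_eq_of_ae_hasDerivAt hx.1 hderiv_ax),
    hf_ax.integral_deriv_eq_sub, add_sub_cancel]

end AbsolutelyContinuous

section PowerSubstitution

lemma quasiMeasurePreserving_rpow {p : ℝ} (hp : p ≠ 0) :
    Measure.QuasiMeasurePreserving (fun x : ℝ => x ^ p) (volume.restrict (Ioi 0)) volume := by
  refine ⟨by fun_prop, Measure.AbsolutelyContinuous.mk fun s hs hs0 => ?_⟩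
  rw [Measure.map_apply (by fun_prop) hs, Measure.restrict_apply' measurableSet_Ioi]
  have himage : volume ((fun y : ℝ => y ^ p⁻¹) '' (s ∩ Ioi 0)) = 0 := by
    refine addHaar_image_eq_zero_of_differentiableOn_of_addHaar_eq_zero volume
      (fun y hy => ?_) (measure_mono_null inter_subset_left hs0)
    exact (differentiableAt_rpow_const_of_ne _ hy.2.ne').differentiableWithinAt
  refine measure_mono_null ?_ himage
  rintro x ⟨hxs, hx : 0 < x⟩
  exact ⟨x ^ p, ⟨hxs, rpow_pos_of_pos hx p⟩, rpow_rpow_inv hx.le hp⟩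

variable {n : ℕ} {a b : ℝ}

lemma image_pow_Ioo (hn : n ≠ 0) (ha : 0 ≤ a) (hab : a ≤ b) :
    (fun x => x ^ n) '' Ioo a b = Ioo (a ^ n) (b ^ n) :=
  (continuous_pow n).continuousOn.image_Ioo_of_strictMonoOn hab
    ((pow_left_strictMonoOn₀ hn).mono fun _ hx => ha.trans hx.1)

lemma setLIntegral_comp_rpow_inv_natCast (hn : n ≠ 0) (ha : 0 ≤ a) (hab : a ≤ b)
    (f : ℝ → ℝ≥0∞) :
    ∫⁻ x in Ioo (a ^ n) (b ^ n), f (x ^ (n⁻¹ : ℝ)) =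
      n * ∫⁻ x in Ioo a b, f x * ENNReal.ofReal (x ^ (n - 1)) := by
  have hmono : MonotoneOn (fun x : ℝ => x ^ n) (Ioo a b) := fun x hx y _ hxy =>
    pow_le_pow_left₀ (ha.trans hx.1.le) hxy n
  rw [← image_pow_Ioo hn ha hab, lintegral_image_eq_lintegral_deriv_mul_of_monotoneOn
      measurableSet_Ioo (fun x _ => (hasDerivAt_pow n x).hasDerivWithinAt) hmono,
    ← lintegral_const_mul' _ _ (ENNReal.natCast_ne_top n)]
  refine setLIntegral_congr_fun measurableSet_Ioo fun x hx => ?_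
  rw [pow_rpow_inv_natCast (ha.trans hx.1.le) hn, ENNReal.ofReal_mul n.cast_nonneg,
    ENNReal.ofReal_natCast]
  ring

end PowerSubstitution

/-- The profile `r` of a radial map of `ℝⁿ` in the volume coordinate `ρ = Rⁿ`, namely
`u(ρ) = r(ρ^{1/n})ⁿ`. -/
noncomputable def volumeProfile (n : ℕ) (r : ℝ → ℝ) (ρ : ℝ) : ℝ := r (ρ ^ (n⁻¹ : ℝ)) ^ n

/-- The Jacobian determinant at radius `R` of the radial map of `ℝⁿ` with profile `r`, where `r'`
stands for the derivative of `r`; for `n = 3` it is `deltaR`. -/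
noncomputable def radialJacobian (n : ℕ) (r r' : ℝ → ℝ) (R : ℝ) : ℝ := r' R * (r R / R) ^ (n - 1)

section VolumeProfile

variable {n : ℕ} {r r' : ℝ → ℝ} {b : ℝ}

lemma hasDerivAt_volumeProfile (hn : n ≠ 0) {ρ : ℝ} (hρ : 0 < ρ)
    (hr : HasDerivAt r (r' (ρ ^ (n⁻¹ : ℝ))) (ρ ^ (n⁻¹ : ℝ))) :
    HasDerivAt (volumeProfile n r) (radialJacobian n r r' (ρ ^ (n⁻¹ : ℝ))) ρ := by
  have hroot : HasDerivAt (fun σ : ℝ => σ ^ (n⁻¹ : ℝ)) ((n : ℝ)⁻¹ * ρ ^ ((n⁻¹ : ℝ) - 1)) ρ :=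
    hasDerivAt_rpow_const (Or.inl hρ.ne')
  refine ((hr.comp ρ hroot).pow n).congr_deriv ?_
  have hroot_deriv : ρ ^ ((n⁻¹ : ℝ) - 1) = ((ρ ^ (n⁻¹ : ℝ)) ^ (n - 1))⁻¹ := by
    rw [← rpow_natCast, ← rpow_mul hρ.le, ← rpow_neg hρ.le, Nat.cast_pred (Nat.pos_of_ne_zero hn)]
    congr 1
    field_simp
    ring
  rw [hroot_deriv, radialJacobian, div_pow, Function.comp_apply]
  field_simp

lemma ae_hasDerivAt_volumeProfile (hn : n ≠ 0) (hb : 0 ≤ b)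
    (hr : ∀ᵐ R ∂volume.restrict (Ioo 0 b), HasDerivAt r (r' R) R) :
    ∀ᵐ ρ ∂volume.restrict (Ioo 0 (b ^ n)),
      HasDerivAt (volumeProfile n r) (radialJacobian n r r' (ρ ^ (n⁻¹ : ℝ))) ρ := by
  rw [ae_restrict_iff' measurableSet_Ioo] at hr
  have hr_root := (quasiMeasurePreserving_rpow (p := (n⁻¹ : ℝ)) (by positivity)).ae hr
  filter_upwards [ae_restrict_mem measurableSet_Ioo,
    ae_restrict_of_ae_restrict_of_subset Ioo_subset_Ioi_self hr_root] with ρ hρ hderiv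
  refine hasDerivAt_volumeProfile hn hρ.1 (hderiv ⟨rpow_pos_of_pos hρ.1 _, ?_⟩)
  exact lt_of_pow_lt_pow_left₀ n hb ((rpow_inv_natCast_pow hρ.1.le hn).trans_lt hρ.2)

lemma absolutelyContinuousOnInterval_volumeProfile (hn : n ≠ 0) (hb : 0 ≤ b)
    (hr : AbsolutelyContinuousOnInterval r 0 b) :
    AbsolutelyContinuousOnInterval (volumeProfile n r) 0 (b ^ n) := by
  have hn_inv : 0 < (n⁻¹ : ℝ) := by positivity
  refine absolutelyContinuousOnInterval_pow (absolutelyContinuousOnInterval_comp_monotoneOn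
    ?_ (absolutelyContinuousOnInterval_rpow hn_inv 0 (b ^ n)) ?_) n
  · rwa [zero_rpow hn_inv.ne', pow_rpow_inv_natCast hb hn]
  · rw [uIcc_of_le (pow_nonneg hb n)]
    exact (monotoneOn_rpow_Ici_of_exponent_nonneg hn_inv.le).mono Icc_subset_Ici_self

theorem stmt3_general (hn : n ≠ 0) (hb : 0 ≤ b) (hInt : IntervalIntegrable r' volume 0 b)
    (hFTC : ∀ R ∈ Icc 0 b, r R = r 0 + ∫ t in 0..R, r' t) :
    (∀ a ∈ Icc 0 (b ^ n),
      IntervalIntegrable (fun ρ => radialJacobian n r r' (ρ ^ (n⁻¹ : ℝ))) volume a (b ^ n) ∧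
      ∀ x ∈ Icc a (b ^ n), volumeProfile n r x =
        volumeProfile n r a + ∫ ρ in a..x, radialJacobian n r r' (ρ ^ (n⁻¹ : ℝ))) ∧
    (∀ᵐ ρ ∂volume.restrict (Ioo 0 (b ^ n)),
      HasDerivAt (volumeProfile n r) (radialJacobian n r r' (ρ ^ (n⁻¹ : ℝ))) ρ) ∧
    ∀ g : ℝ → ℝ≥0∞,
      ∫⁻ ρ in Ioo 0 (b ^ n), g (radialJacobian n r r' (ρ ^ (n⁻¹ : ℝ))) =
        n * ∫⁻ R in Ioo 0 b, g (radialJacobian n r r' R) * ENNReal.ofReal (R ^ (n - 1)) := by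
  rw [← uIcc_of_le hb] at hFTC
  have hderiv := ae_hasDerivAt_volumeProfile hn hb (ae_hasDerivAt_of_eq_add_integral hInt hFTC)
  have hac := absolutelyContinuousOnInterval_volumeProfile hn hb
    (absolutelyContinuousOnInterval_of_eq_add_integral hInt hFTC)
  refine ⟨fun a ha => ?_, hderiv, fun g => ?_⟩
  · exact intervalIntegrable_and_eq_add_integral_of_ae_hasDerivAt
      (hac.mono (uIcc_subset_uIcc_right (Icc_subset_uIcc ha))) ha.2
      (ae_restrict_of_ae_restrict_of_subset (Ioo_subset_Ioo_left ha.1) hderiv)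
  · simpa only [zero_pow hn] using
      setLIntegral_comp_rpow_inv_natCast hn le_rfl hb fun R => g (radialJacobian n r r' R)

end VolumeProfile

theorem stmt3 (r r' : ℝ → ℝ)
    (hInt : IntervalIntegrable r' volume 0 1)
    (hFTC : ∀ x ∈ Icc (0:ℝ) 1, r x = r 0 + ∫ t in (0:ℝ)..x, r' t)
    (hr'pos : ∀ᵐ R ∂volume.restrict (Ioo (0:ℝ) 1), 0 < r' R)
    (hr0 : 0 ≤ r 0) (hrpos : ∀ R ∈ Ioc (0:ℝ) 1, 0 < r R) :
    -- `u(ρ) = r(ρ^{1/3})³` is absolutely continuous on compact subintervals of `(0,1]`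
    -- with `u' = δ_r(ρ^{1/3})` a.e., and the change of variables identity holds.
    (∀ a ∈ Ioc (0:ℝ) 1,
      IntervalIntegrable (fun t => deltaR r r' (t ^ ((1:ℝ)/3))) volume a 1 ∧
      ∀ x ∈ Icc a 1,
        r (x ^ ((1:ℝ)/3)) ^ 3 =
          r (a ^ ((1:ℝ)/3)) ^ 3 + ∫ t in a..x, deltaR r r' (t ^ ((1:ℝ)/3))) ∧
    (∀ᵐ ρ ∂volume.restrict (Ioo (0:ℝ) 1),
      HasDerivAt (fun σ => r (σ ^ ((1:ℝ)/3)) ^ 3) (deltaR r r' (ρ ^ ((1:ℝ)/3))) ρ) ∧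
    (∀ g : ℝ → ℝ≥0∞, Measurable g →
      (∫⁻ ρ in Ioo (0:ℝ) 1, g (deltaR r r' (ρ ^ ((1:ℝ)/3)))) =
        3 * ∫⁻ R in Ioo (0:ℝ) 1, g (deltaR r r' R) * ENNReal.ofReal (R ^ 2)) := by
  have h := stmt3_general three_ne_zero zero_le_one hInt hFTC
  unfold volumeProfile at h
  simp only [one_pow, Nat.cast_ofNat, ← one_div] at h
  exact ⟨fun a ha => h.1 a (Ioc_subset_Icc_self ha), h.2.1, fun g _ => h.2.2 g⟩
end

section
/- Assume 0<k0≤ρ0(R)≤k1 on [0,1], that Φ is continuous, that Φ satisfies the growth condition (G) with (H1)–(H3), and that for each fixed R the map is polyconvex in the sense that Φ(R,v1,v2,v3)=g(R,v1,v2,v3,v1v2v3) for some continuous g that is convex in its last four arguments. Then for every λ>0 there exists r_λ ∈ A_λ such that I(r_λ) = inf { I(r) : r ∈ A_λ }. -/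
open MeasureTheory Real Set Filter
open scoped ENNReal

/-- `M_R = 4π ∫₀^R ρ0(u) u² du`. -/
noncomputable def Mfun (ρ0 : ℝ → ℝ) (R : ℝ) : ℝ := 4 * π * ∫ u in (0:ℝ)..R, ρ0 u * u ^ 2

/-- Mechanical energy `I_mec(r) = ∫₀¹ Φ(R, r'(R), r(R)/R, r(R)/R) R² dR`. -/
noncomputable def Imec (Φ : ℝ → ℝ → ℝ → ℝ → ℝ) (r r' : ℝ → ℝ) : ℝ :=
  ∫ R in Ioo (0:ℝ) 1, Φ R (r' R) (r R / R) (r R / R) * R ^ 2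

/-- Gravitational potential energy `I_pot(r) = ∫₀¹ ρ0(R) M_R r(R)⁻¹ R² dR`. -/
noncomputable def Ipot (ρ0 : ℝ → ℝ) (r : ℝ → ℝ) : ℝ :=
  ∫ R in Ioo (0:ℝ) 1, ρ0 R * Mfun ρ0 R * (r R)⁻¹ * R ^ 2

/-- Total energy `I = I_mec − I_pot`. -/
noncomputable def Ifun (Φ : ℝ → ℝ → ℝ → ℝ → ℝ) (ρ0 : ℝ → ℝ) (r r' : ℝ → ℝ) : ℝ :=
  Imec Φ r r' - Ipot ρ0 r

/-- The admissible set `A_λ`. -/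
def Adm (Φ : ℝ → ℝ → ℝ → ℝ → ℝ) (lam : ℝ) (r r' : ℝ → ℝ) : Prop :=
  IntervalIntegrable r' volume 0 1 ∧
  (∀ x ∈ Icc (0:ℝ) 1, r x = r 0 + ∫ t in (0:ℝ)..x, r' t) ∧
  (∀ᵐ R ∂volume.restrict (Ioo (0:ℝ) 1), 0 < r' R) ∧
  r 1 = lam ∧ 0 ≤ r 0 ∧
  IntegrableOn (fun R => Φ R (r' R) (r R / R) (r R / R) * R ^ 2) (Ioo (0:ℝ) 1)

/-!
The direct method. Radial deformations are monotone, so by Helly's theorem a minimizing sequence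
has an a.e. convergent subsequence. Where weak compactness of the derivatives would be used, a
Komlós-type argument provides instead convex combinations of their tails which converge a.e.:
nearly minimizing the strictly convex functional `∫ exp (-v)` over the convex hulls of the tails
makes `exp (-v / 2)` Cauchy in `L²`. Jensen's inequality for the convex representative `g` together
with Fatou's lemma gives lower semicontinuity of the mechanical energy; the blow-up of `g` as the
determinant tends to `0` keeps the limit strains in the open orthant, and Vitali's theorem, with
the growth exponent `γ > 1`, identifies the limit of the derivatives with the derivative of the
limit.

The potential is a compact perturbation: since `δ R² = r' r²`, the Cauchy–Schwarz inequality for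
`∫ t² dt` gives `R⁶ ≤ 9 (I_mec / K + 1) r³`. Hence `R² / r` grows only like `I_mec ^ (1 / 3)`, so
`I_pot` is absorbed by `I_mec`, and it converges along a.e. convergent sequences of bounded energy.
-/

open scoped Topology

/-! ### Helly's selection theorem -/

lemma exists_monotone_tendsto_of_tendsto_rat {f : ℕ → ℝ → ℝ} {L : ℚ → ℝ}
    (hf : ∀ n, Monotone (f n)) (hL : ∀ q : ℚ, Tendsto (fun n => f n q) atTop (𝓝 (L q))) :
    ∃ G : ℝ → ℝ, Monotone G ∧
      ∀ x, ContinuousAt G x → Tendsto (fun n => f n x) atTop (𝓝 (G x)) := by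
  have hL_mono : Monotone L := fun p q hpq =>
    le_of_tendsto_of_tendsto' (hL p) (hL q) fun n => hf n (mod_cast hpq)
  let G : ℝ → ℝ := fun x => sSup (L '' {q : ℚ | (q : ℝ) < x})
  have nonempty (x : ℝ) : (L '' {q : ℚ | (q : ℝ) < x}).Nonempty :=
    Set.Nonempty.image L (exists_rat_lt x)
  have bddAbove (x : ℝ) : BddAbove (L '' {q : ℚ | (q : ℝ) < x}) := by
    obtain ⟨p, hp⟩ := exists_rat_gt x
    refine ⟨L p, ?_⟩
    rintro _ ⟨q, hq, rfl⟩
    exact hL_mono (mod_cast (lt_trans hq hp).le)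
  have le_G {q : ℚ} {x : ℝ} (hq : (q : ℝ) < x) : L q ≤ G x := le_csSup (bddAbove x) ⟨q, hq, rfl⟩
  refine ⟨G, fun x y hxy => csSup_le_csSup (bddAbove y) (nonempty x)
    (image_mono fun q hq => lt_of_lt_of_le hq hxy), fun x hx => ?_⟩
  refine tendsto_order.2 ⟨fun a ha => ?_, fun a ha => ?_⟩
  · obtain ⟨_, ⟨q, hqx, rfl⟩, haq⟩ := exists_lt_of_lt_csSup (nonempty x) ha
    filter_upwards [(hL q).eventually (lt_mem_nhds haq)] with n hn
    exact hn.trans_le (hf n (le_of_lt hqx))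
  · obtain ⟨y, hya, hxy⟩ : ∃ y, G y < a ∧ x < y :=
      (((hx.eventually (gt_mem_nhds ha)).filter_mono nhdsWithin_le_nhds).and
        self_mem_nhdsWithin : ∀ᶠ y in 𝓝[>] x, G y < a ∧ x < y).exists
    obtain ⟨q, hxq, hqy⟩ := exists_rat_btwn hxy
    filter_upwards [(hL q).eventually (gt_mem_nhds ((le_G hqy).trans_lt hya))] with n hn
    exact (hf n hxq.le).trans_lt hn

lemma exists_subseq_monotone_tendsto {f : ℕ → ℝ → ℝ} {a b : ℝ} (hf : ∀ n, Monotone (f n))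
    (hab : ∀ n x, f n x ∈ Icc a b) :
    ∃ (σ : ℕ → ℕ) (G : ℝ → ℝ), StrictMono σ ∧ Monotone G ∧
      ∀ x, ContinuousAt G x → Tendsto (fun n => f (σ n) x) atTop (𝓝 (G x)) := by
  obtain ⟨L, -, σ, hσ, hL⟩ :=
    (isCompact_univ_pi fun _ : ℚ => isCompact_Icc (a := a) (b := b)).tendsto_subseq
      (x := fun n (q : ℚ) => f n q) fun n q _ => hab n q
  obtain ⟨G, hG, hlim⟩ :=
    exists_monotone_tendsto_of_tendsto_rat (fun n => hf (σ n)) (tendsto_pi_nhds.1 hL)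
  exact ⟨σ, G, hσ, hG, hlim⟩

lemma exists_subseq_ae_tendsto_of_monotoneOn {f : ℕ → ℝ → ℝ} {x₀ x₁ a b : ℝ} (h : x₀ ≤ x₁)
    (hf : ∀ n, MonotoneOn (f n) (Icc x₀ x₁)) (hab : ∀ n, ∀ x ∈ Icc x₀ x₁, f n x ∈ Icc a b) :
    ∃ (σ : ℕ → ℕ) (G : ℝ → ℝ), StrictMono σ ∧
      ∀ᵐ x ∂volume.restrict (Icc x₀ x₁), Tendsto (fun n => f (σ n) x) atTop (𝓝 (G x)) := by
  obtain ⟨σ, G, hσ, hG, hlim⟩ := exists_subseq_monotone_tendsto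
    (f := fun n => IccExtend h fun y => f n y)
    (fun n => Monotone.IccExtend h fun y z hyz => hf n y.2 z.2 hyz)
    (fun n x => hab n _ (projIcc x₀ x₁ h x).2)
  refine ⟨σ, G, hσ, ?_⟩
  filter_upwards [ae_restrict_of_ae (hG.countable_not_continuousAt.ae_notMem volume),
    ae_restrict_mem measurableSet_Icc] with x hx hxI
  simpa [IccExtend_of_mem _ _ hxI] using hlim x (by simpa using hx)

/-! ### Forward convex combinations -/

/-- The rows `(c n k)_{k ∈ s n}` are the weights of convex combinations of the tails `k ≥ n` of a
sequence, as in Mazur's and Komlós' lemmas. -/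
structure IsForwardConvex (s : ℕ → Finset ℕ) (c : ℕ → ℕ → ℝ) : Prop where
  le_of_mem : ∀ {n k}, k ∈ s n → n ≤ k
  nonneg : ∀ {n k}, k ∈ s n → 0 ≤ c n k
  sum_eq_one : ∀ n, ∑ k ∈ s n, c n k = 1

lemma tendsto_sum_mul_of_forward {s : ℕ → Finset ℕ} {w : ℕ → ℕ → ℝ} {a : ℕ → ℝ} {α β : ℝ}
    (hs : ∀ n, ∀ k ∈ s n, n ≤ k) (hw : ∀ n, ∀ k ∈ s n, 0 ≤ w n k)
    (hβ : Tendsto (fun n => ∑ k ∈ s n, w n k) atTop (𝓝 β)) (ha : Tendsto a atTop (𝓝 α)) :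
    Tendsto (fun n => ∑ k ∈ s n, w n k * a k) atTop (𝓝 (β * α)) := by
  have split (n : ℕ) : ∑ k ∈ s n, w n k * a k
      = ∑ k ∈ s n, w n k * (a k - α) + (∑ k ∈ s n, w n k) * α := by
    rw [Finset.sum_mul, ← Finset.sum_add_distrib]
    exact Finset.sum_congr rfl fun k _ => by ring
  suffices Tendsto (fun n => ∑ k ∈ s n, w n k * (a k - α)) atTop (𝓝 0) by
    simpa only [split, zero_add] using this.add (hβ.mul_const α)
  refine Metric.tendsto_atTop.2 fun ε hε => ?_
  have hβ_pos : 0 < |β| + 1 := by positivity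
  obtain ⟨N₁, hN₁⟩ := Metric.tendsto_atTop.1 ha (ε / (|β| + 1)) (by positivity)
  obtain ⟨N₂, hN₂⟩ := eventually_atTop.1 (hβ.eventually (gt_mem_nhds
    (lt_of_le_of_lt (le_abs_self β) (lt_add_one |β|))))
  refine ⟨max N₁ N₂, fun n hn => ?_⟩
  rw [dist_zero_right, Real.norm_eq_abs]
  calc |∑ k ∈ s n, w n k * (a k - α)|
      ≤ ∑ k ∈ s n, w n k * (ε / (|β| + 1)) := by
        refine (Finset.abs_sum_le_sum_abs _ _).trans (Finset.sum_le_sum fun k hk => ?_)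
        rw [abs_mul, abs_of_nonneg (hw n k hk)]
        exact mul_le_mul_of_nonneg_left
          (hN₁ k ((le_of_max_le_left hn).trans (hs n k hk))).le (hw n k hk)
    _ = (∑ k ∈ s n, w n k) * (ε / (|β| + 1)) := (Finset.sum_mul ..).symm
    _ < (|β| + 1) * (ε / (|β| + 1)) :=
        mul_lt_mul_of_pos_right (hN₂ n (le_of_max_le_right hn)) (by positivity)
    _ = ε := mul_div_cancel₀ ε hβ_pos.ne'

namespace IsForwardConvex

variable {s : ℕ → Finset ℕ} {c : ℕ → ℕ → ℝ}

lemma tendsto_sum_mul_mul (h : IsForwardConvex s c) {b a : ℕ → ℝ} {α β : ℝ} (hb : ∀ k, 0 ≤ b k)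
    (hβ : Tendsto (fun n => ∑ k ∈ s n, c n k * b k) atTop (𝓝 β)) (ha : Tendsto a atTop (𝓝 α)) :
    Tendsto (fun n => ∑ k ∈ s n, c n k * (b k * a k)) atTop (𝓝 (β * α)) := by
  simpa only [mul_assoc] using tendsto_sum_mul_of_forward (fun n k => h.le_of_mem)
    (fun n k hk => mul_nonneg (h.nonneg hk) (hb k)) hβ ha

lemma tendsto_sum_mul (h : IsForwardConvex s c) {a : ℕ → ℝ} {α : ℝ}
    (ha : Tendsto a atTop (𝓝 α)) :
    Tendsto (fun n => ∑ k ∈ s n, c n k * a k) atTop (𝓝 α) := by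
  simpa only [one_mul] using h.tendsto_sum_mul_mul (b := fun _ => 1) (β := 1)
    (fun _ => zero_le_one) (by simp only [mul_one, h.sum_eq_one, tendsto_const_nhds]) ha

end IsForwardConvex

lemma exists_isForwardConvex_of_forall_mem_convexHull {E : Type*} [AddCommGroup E] [Module ℝ E]
    {f v : ℕ → E} (hv : ∀ n, v n ∈ convexHull ℝ (f '' Ici n)) :
    ∃ s c, IsForwardConvex s c ∧ ∀ n, v n = ∑ k ∈ s n, c n k • f k := by
  have weights (n : ℕ) : ∃ (t : Finset ℕ) (w : ℕ → ℝ), (∀ k ∈ t, n ≤ k) ∧ (∀ k ∈ t, 0 ≤ w k) ∧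
      ∑ k ∈ t, w k = 1 ∧ v n = ∑ k ∈ t, w k • f k := by
    obtain ⟨ι, _, w, z, hw, hw_sum, hz, hvn⟩ := mem_convexHull_iff_exists_fintype.1 (hv n)
    choose j hj hjz using hz
    classical
    refine ⟨Finset.univ.image j, fun k => ∑ i with j i = k, w i, ?_, ?_, ?_, ?_⟩
    · simpa using hj
    · exact fun k _ => Finset.sum_nonneg fun i _ => hw i
    · rw [Finset.sum_fiberwise_of_maps_to fun i hi => Finset.mem_image_of_mem j hi, hw_sum]
    · rw [← hvn, ← Finset.sum_fiberwise_of_maps_to fun i hi => Finset.mem_image_of_mem j hi]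
      refine Finset.sum_congr rfl fun k _ => ?_
      rw [Finset.sum_smul]
      exact Finset.sum_congr rfl fun i hi => by rw [← hjz i, (Finset.mem_filter.1 hi).2]
  choose s c hs hc hc_sum hv_eq using weights
  exact ⟨s, c, ⟨fun {n k} => hs n k, fun {n k} => hc n k, hc_sum⟩, hv_eq⟩

/-! ### A Komlós-type compactness lemma -/

section Komlos

variable {α : Type*} [MeasurableSpace α] {μ : Measure α}

lemma aemeasurable_liminf {f : ℕ → α → ℝ≥0∞} (hf : ∀ n, AEMeasurable (f n) μ) :
    AEMeasurable (fun x => liminf (fun n => f n x) atTop) μ := by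
  refine ⟨fun x => liminf (fun n => (hf n).mk _ x) atTop,
    .liminf fun n => (hf n).measurable_mk, ?_⟩
  filter_upwards [ae_all_iff.2 fun n => (hf n).ae_eq_mk] with x hx
  simp only [hx]

lemma lintegral_liminf_ofReal_le {f : ℕ → α → ℝ} (hf : ∀ n, Integrable (f n) μ)
    (h0 : ∀ n, 0 ≤ᵐ[μ] f n) :
    ∫⁻ x, liminf (fun n => ENNReal.ofReal (f n x)) atTop ∂μ
      ≤ liminf (fun n => ENNReal.ofReal (∫ x, f n x ∂μ)) atTop := by
  simp only [ofReal_integral_eq_lintegral_ofReal (hf _) (h0 _)]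
  exact lintegral_liminf_le' fun n => (hf n).aemeasurable.ennreal_ofReal

lemma liminf_ofReal_le_of_forall_le {a : ℕ → ℝ} {B : ℝ} (h : ∀ n, a n ≤ B) :
    liminf (fun n => ENNReal.ofReal (a n)) atTop ≤ ENNReal.ofReal B :=
  (liminf_le_liminf (.of_forall fun n => ENNReal.ofReal_le_ofReal (h n))).trans_eq
    (liminf_const _)

lemma ae_liminf_ofReal_lt_top {f : ℕ → α → ℝ} {B : ℝ} (hf : ∀ n, Integrable (f n) μ)
    (h0 : ∀ n, 0 ≤ᵐ[μ] f n) (hB : ∀ n, ∫ x, f n x ∂μ ≤ B) :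
    ∀ᵐ x ∂μ, liminf (fun n => ENNReal.ofReal (f n x)) atTop < ∞ :=
  ae_lt_top' (aemeasurable_liminf fun n => (hf n).aemeasurable.ennreal_ofReal)
    (((lintegral_liminf_ofReal_le hf h0).trans (liminf_ofReal_le_of_forall_le hB)).trans_lt
      ENNReal.ofReal_lt_top).ne

lemma exists_forall_mem_midpoint_gap_le {E : Type*} [AddCommGroup E] [Module ℝ E] {V : ℕ → Set E}
    (hV : Antitone V) (hconv : ∀ n, Convex ℝ (V n)) (hne : ∀ n, (V n).Nonempty) {J : E → ℝ}
    {a b : ℝ} (hJ : ∀ v ∈ V 0, J v ∈ Icc a b) :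
    ∃ v : ℕ → E, (∀ n, v n ∈ V n) ∧ ∀ ε > 0, ∃ N, ∀ n ≥ N, ∀ m ≥ N,
      J (v n) + J (v m) - 2 * J (midpoint ℝ (v n) (v m)) ≤ ε := by
  have mem_zero {n : ℕ} {v : E} (hv : v ∈ V n) : v ∈ V 0 := hV n.zero_le hv
  have bddBelow (n : ℕ) : BddBelow (J '' V n) :=
    ⟨a, by rintro _ ⟨v, hv, rfl⟩; exact (hJ v (mem_zero hv)).1⟩
  set j : ℕ → ℝ := fun n => sInf (J '' V n)
  have j_le {n : ℕ} {v : E} (hv : v ∈ V n) : j n ≤ J v := csInf_le (bddBelow n) ⟨v, hv, rfl⟩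
  have j_mono : Monotone j := fun n m hnm =>
    csInf_le_csInf (bddBelow n) ((hne m).image J) (image_mono (hV hnm))
  have j_lim : Tendsto j atTop (𝓝 (⨆ n, j n)) := by
    refine tendsto_atTop_ciSup j_mono ⟨b, ?_⟩
    rintro _ ⟨n, rfl⟩
    obtain ⟨v, hv⟩ := hne n
    exact (j_le hv).trans (hJ v (mem_zero hv)).2
  have near_min (n : ℕ) : ∃ v ∈ V n, J v < j n + 1 / ((n : ℝ) + 1) := by
    obtain ⟨_, ⟨v, hv, rfl⟩, hlt⟩ := exists_lt_of_csInf_lt ((hne n).image J)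
      (lt_add_of_pos_right (j n) (Nat.one_div_pos_of_nat (n := n)))
    exact ⟨v, hv, hlt⟩
  choose v hv hvlt using near_min
  refine ⟨v, hv, fun ε hε => ?_⟩
  have J_lim : Tendsto (fun n => j n + 1 / ((n : ℝ) + 1)) atTop (𝓝 (⨆ n, j n)) := by
    simpa using j_lim.add tendsto_one_div_add_atTop_nhds_zero_nat
  obtain ⟨N, hN⟩ := eventually_atTop.1
    ((J_lim.eventually (gt_mem_nhds (lt_add_of_pos_right _ (half_pos (half_pos hε))))).and
      (j_lim.eventually (lt_mem_nhds (sub_lt_self _ (half_pos (half_pos hε))))))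
  refine ⟨N, fun n hn m hm => ?_⟩
  have mid : j N ≤ J (midpoint ℝ (v n) (v m)) :=
    j_le ((hconv N).midpoint_mem (hV hn (hv n)) (hV hm (hv m)))
  linarith [hvlt n, hvlt m, (hN n hn).1, (hN m hm).1, (hN N le_rfl).2]

lemma exists_subseq_ae_tendsto_of_integral_sq_sub_le {u : ℕ → α → ℝ} (hu : ∀ n, MemLp (u n) 2 μ)
    (hc : ∀ ε > 0, ∃ N, ∀ n ≥ N, ∀ m ≥ N, ∫ x, (u n x - u m x) ^ 2 ∂μ ≤ ε) :
    ∃ (σ : ℕ → ℕ) (U : α → ℝ), StrictMono σ ∧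
      ∀ᵐ x ∂μ, Tendsto (fun k => u (σ k) x) atTop (𝓝 (U x)) := by
  have cauchy : CauchySeq fun n => (hu n).toLp := by
    refine Metric.cauchySeq_iff.2 fun ε hε => ?_
    obtain ⟨N, hN⟩ := hc ((ε / 2) ^ 2) (by positivity)
    refine ⟨N, fun n hn m hm => ?_⟩
    rw [dist_edist, Lp.edist_toLp_toLp,
      ((hu n).sub (hu m)).eLpNorm_eq_integral_rpow_norm two_ne_zero ENNReal.ofNat_ne_top]
    simp only [Pi.sub_apply, ENNReal.toReal_ofNat, rpow_ofNat, norm_eq_abs, sq_abs]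
    rw [ENNReal.toReal_ofReal (by positivity), ← one_div, ← sqrt_eq_rpow]
    exact ((sqrt_le_iff.2 ⟨by positivity, hN n hn m hm⟩)).trans_lt (half_lt_self hε)
  obtain ⟨U, hU⟩ := cauchySeq_tendsto_of_complete cauchy
  obtain ⟨σ, hσ, hlim⟩ := (tendstoInMeasure_of_tendsto_Lp hU).exists_seq_tendsto_ae
  refine ⟨σ, U, hσ, ?_⟩
  filter_upwards [hlim, ae_all_iff.2 fun n => (hu n).coeFn_toLp] with x hx hux
  simpa only [hux] using hx

lemma tendsto_neg_two_mul_log_of_tendsto_exp {v : ℕ → ℝ} {u : ℝ}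
    (hu : Tendsto (fun n => exp (-v n / 2)) atTop (𝓝 u))
    (hv : liminf (fun n => ENNReal.ofReal (v n)) atTop ≠ ∞) :
    Tendsto v atTop (𝓝 (-2 * log u)) := by
  have hu0 : u ≠ 0 := by
    rintro rfl
    have v_top : Tendsto v atTop atTop := by
      have := tendsto_exp_comp_nhds_zero.1 hu
      simpa using (this.const_mul_atBot_of_neg (r := -2) (by norm_num)).congr fun n => by ring
    exact hv (ENNReal.tendsto_ofReal_atTop.comp v_top).liminf_eq
  refine (((continuousAt_log hu0).tendsto.comp hu).const_mul (-2)).congr fun n => ?_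
  simp only [Function.comp_apply, log_exp]
  ring

lemma convex_setOf_integrable_nonneg_integral_le (B : ℝ) :
    Convex ℝ {v : α → ℝ | Integrable v μ ∧ 0 ≤ᵐ[μ] v ∧ ∫ x, v x ∂μ ≤ B} := by
  rintro v ⟨hv, hv0, hvB⟩ w ⟨hw, hw0, hwB⟩ a b ha hb hab
  refine ⟨(hv.smul a).add (hw.smul b), ?_, ?_⟩
  · filter_upwards [hv0, hw0] with x hvx hwx
    exact add_nonneg (mul_nonneg ha hvx) (mul_nonneg hb hwx)
  · refine (integral_add (hv.smul a) (hw.smul b)).trans_le ?_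
    simp only [Pi.smul_apply, integral_smul]
    exact convex_Iic B hvB hwB ha hb hab

variable [IsFiniteMeasure μ] {v w : α → ℝ}

lemma memLp_exp_neg_of_nonneg (hv : AEMeasurable v μ) (h0 : 0 ≤ᵐ[μ] v) (p : ℝ≥0∞) :
    MemLp (fun x => exp (-v x)) p μ := by
  refine MemLp.of_bound (measurable_exp.comp_aemeasurable hv.neg).aestronglyMeasurable 1 ?_
  filter_upwards [h0] with x hx
  rw [norm_of_nonneg (exp_pos _).le]
  exact exp_le_one_iff.2 (neg_nonpos.2 hx)

lemma integrable_exp_neg_of_nonneg (hv : AEMeasurable v μ) (h0 : 0 ≤ᵐ[μ] v) :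
    Integrable (fun x => exp (-v x)) μ :=
  memLp_one_iff_integrable.1 (memLp_exp_neg_of_nonneg hv h0 1)

lemma integral_exp_neg_mem_Icc (hv : AEMeasurable v μ) (h0 : 0 ≤ᵐ[μ] v) :
    ∫ x, exp (-v x) ∂μ ∈ Icc 0 (∫ _, 1 ∂μ) := by
  refine ⟨integral_nonneg fun x => (exp_pos _).le,
    integral_mono_ae (integrable_exp_neg_of_nonneg hv h0) (integrable_const 1) ?_⟩
  filter_upwards [h0] with x hx
  exact exp_le_one_iff.2 (neg_nonpos.2 hx)

lemma integral_sq_sub_exp_neg_half (hv : AEMeasurable v μ) (hw : AEMeasurable w μ)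
    (hv0 : 0 ≤ᵐ[μ] v) (hw0 : 0 ≤ᵐ[μ] w) :
    ∫ x, (exp (-v x / 2) - exp (-w x / 2)) ^ 2 ∂μ
      = ∫ x, exp (-v x) ∂μ + ∫ x, exp (-w x) ∂μ - 2 * ∫ x, exp (-midpoint ℝ v w x) ∂μ := by
  have mid_apply (x : α) : midpoint ℝ v w x = (v x + w x) / 2 := by
    simp [midpoint_eq_smul_add, inv_mul_eq_div]
  have mid_meas : AEMeasurable (midpoint ℝ v w) μ :=
    ((hv.add hw).div_const 2).congr (.of_forall fun x => (mid_apply x).symm)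
  have mid_nonneg : 0 ≤ᵐ[μ] midpoint ℝ v w := by
    filter_upwards [hv0, hw0] with x hvx hwx
    rw [mid_apply]
    exact div_nonneg (add_nonneg hvx hwx) zero_le_two
  have exp_v := integrable_exp_neg_of_nonneg hv hv0
  have exp_w := integrable_exp_neg_of_nonneg hw hw0
  rw [← integral_const_mul, ← integral_add exp_v exp_w]
  refine Eq.trans ?_ (integral_sub (exp_v.add exp_w)
    ((integrable_exp_neg_of_nonneg mid_meas mid_nonneg).const_mul 2))
  refine integral_congr_ae (.of_forall fun x => ?_)
  simp only [mid_apply, sub_sq, ← exp_nat_mul, mul_assoc, ← exp_add, Nat.cast_ofNat]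
  ring_nf

theorem exists_isForwardConvex_ae_tendsto {f : ℕ → α → ℝ} {B : ℝ}
    (hf : ∀ k, Integrable (f k) μ) (h0 : ∀ k, 0 ≤ᵐ[μ] f k) (hB : ∀ k, ∫ x, f k x ∂μ ≤ B) :
    ∃ s c, ∃ F : α → ℝ, IsForwardConvex s c ∧
      ∀ᵐ x ∂μ, Tendsto (fun n => ∑ k ∈ s n, c n k * f k x) atTop (𝓝 (F x)) := by
  set V : ℕ → Set (α → ℝ) := fun n => convexHull ℝ (f '' Ici n)
  have V_anti : Antitone V := fun n m hnm => convexHull_mono (image_mono (Ici_subset_Ici.2 hnm))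
  have V_subset (n : ℕ) : V n ⊆ {v | Integrable v μ ∧ 0 ≤ᵐ[μ] v ∧ ∫ x, v x ∂μ ≤ B} := by
    refine convexHull_min ?_ (convex_setOf_integrable_nonneg_integral_le B)
    rintro _ ⟨k, -, rfl⟩
    exact ⟨hf k, h0 k, hB k⟩
  obtain ⟨v, hvV, hgap⟩ := exists_forall_mem_midpoint_gap_le V_anti
    (fun n => convex_convexHull ℝ _) (fun n => (nonempty_Ici.image f).convexHull)
    fun v hv => integral_exp_neg_mem_Icc (V_subset 0 hv).1.aemeasurable (V_subset 0 hv).2.1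
  have hv (n : ℕ) := V_subset n (hvV n)
  have hexp (n : ℕ) : MemLp (fun x => exp (-v n x / 2)) 2 μ := by
    simpa only [neg_div] using memLp_exp_neg_of_nonneg ((hv n).1.aemeasurable.div_const 2)
      ((hv n).2.1.mono fun x hx => div_nonneg hx zero_le_two) 2
  obtain ⟨σ, U, hσ, hU⟩ := exists_subseq_ae_tendsto_of_integral_sq_sub_le hexp fun ε hε => by
    simpa only [integral_sq_sub_exp_neg_half (hv _).1.aemeasurable (hv _).1.aemeasurable
      (hv _).2.1 (hv _).2.1] using hgap ε hε
  obtain ⟨s, c, hsc, hvc⟩ := exists_isForwardConvex_of_forall_mem_convexHull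
    fun n => V_anti (hσ.le_apply (x := n)) (hvV (σ n))
  have liminf_lt := ae_liminf_ofReal_lt_top (fun n => (hv (σ n)).1) (fun n => (hv (σ n)).2.1)
    fun n => (hv (σ n)).2.2
  refine ⟨s, c, fun x => -2 * log (U x), hsc, ?_⟩
  filter_upwards [hU, liminf_lt] with x hx hxlt
  simpa [hvc] using tendsto_neg_two_mul_log_of_tendsto_exp hx hxlt.ne

end Komlos

/-! ### Limits and inequalities for integrals -/

section Integral

variable {α : Type*} [MeasurableSpace α] {μ : Measure α}

lemma integrable_and_integral_le_of_ofReal_le_liminf {f : ℕ → α → ℝ} {g : α → ℝ} {m : ℝ}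
    (hf : ∀ n, Integrable (f n) μ) (h0 : ∀ n, 0 ≤ᵐ[μ] f n) (hg : AEStronglyMeasurable g μ)
    (hg0 : 0 ≤ᵐ[μ] g)
    (hgf : ∀ᵐ x ∂μ, ENNReal.ofReal (g x) ≤ liminf (fun n => ENNReal.ofReal (f n x)) atTop)
    (hm0 : 0 ≤ m)
    (hm : liminf (fun n => ENNReal.ofReal (∫ x, f n x ∂μ)) atTop ≤ ENNReal.ofReal m) :
    Integrable g μ ∧ ∫ x, g x ∂μ ≤ m := by
  have lintegral_le : ∫⁻ x, ENNReal.ofReal (g x) ∂μ ≤ ENNReal.ofReal m :=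
    (lintegral_mono_ae hgf).trans ((lintegral_liminf_ofReal_le hf h0).trans hm)
  have hgi : Integrable g μ :=
    (lintegral_ofReal_ne_top_iff_integrable hg hg0).1
      (ne_top_of_le_ne_top ENNReal.ofReal_ne_top lintegral_le)
  rw [← ofReal_integral_eq_lintegral_ofReal hgi hg0] at lintegral_le
  exact ⟨hgi, (ENNReal.ofReal_le_ofReal_iff hm0).1 lintegral_le⟩

lemma unifIntegrable_of_eLpNorm_le {ι E : Type*} [NormedAddCommGroup E] {f : ι → α → E}
    {p q : ℝ≥0∞} {M : NNReal} (hp : p ≠ 0) (hpq : p < q)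
    (hf : ∀ i, AEStronglyMeasurable (f i) μ) (hM : ∀ i, eLpNorm (f i) q μ ≤ M) :
    UnifIntegrable f p μ := by
  have hθ : 0 < 1 / p.toReal - 1 / q.toReal := by
    have hp_pos : 0 < p.toReal := ENNReal.toReal_pos hp hpq.ne_top
    rcases eq_or_ne q ∞ with rfl | hq
    · simpa using hp_pos
    · exact sub_pos.2 (one_div_lt_one_div_of_lt hp_pos
        ((ENNReal.toReal_lt_toReal hpq.ne_top hq).2 hpq))
  set θ := 1 / p.toReal - 1 / q.toReal
  intro ε hε
  have hη : 0 < ε / (M + 1) := by positivity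
  refine ⟨(ε / (M + 1)) ^ θ⁻¹, by positivity, fun i t ht hμt => ?_⟩
  calc eLpNorm (t.indicator (f i)) p μ
      = eLpNorm (f i) p (μ.restrict t) := eLpNorm_indicator_eq_eLpNorm_restrict ht
    _ ≤ eLpNorm (f i) q (μ.restrict t) * μ.restrict t univ ^ θ :=
        eLpNorm_le_eLpNorm_mul_rpow_measure_univ hpq.le (hf i).restrict
    _ ≤ M * ENNReal.ofReal ((ε / (M + 1)) ^ θ⁻¹) ^ θ := by
        rw [Measure.restrict_apply_univ]
        gcongr
        exact (eLpNorm_mono_measure _ Measure.restrict_le_self).trans (hM i)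
    _ = ENNReal.ofReal (M * (ε / (M + 1))) := by
        rw [ENNReal.ofReal_rpow_of_nonneg (by positivity) hθ.le, rpow_inv_rpow hη.le hθ.ne',
          ENNReal.ofReal_mul M.coe_nonneg, ENNReal.ofReal_coe_nnreal]
    _ ≤ ENNReal.ofReal ε := by
        refine ENNReal.ofReal_le_ofReal ?_
        rw [mul_div_assoc', div_le_iff₀ (by positivity)]
        linarith [mul_comm (M : ℝ) ε]

lemma tendsto_integral_of_rpow_le [IsFiniteMeasure μ] {f h : ℕ → α → ℝ} {g : α → ℝ} {γ M : ℝ}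
    (hγ : 1 < γ) (hf : ∀ n, Integrable (f n) μ) (hg : Integrable g μ) (hh : ∀ n, Integrable (h n) μ)
    (hfh : ∀ n, ∀ᵐ x ∂μ, |f n x| ^ γ ≤ h n x) (hM : ∀ n, ∫ x, h n x ∂μ ≤ M)
    (hlim : ∀ᵐ x ∂μ, Tendsto (fun n => f n x) atTop (𝓝 (g x))) :
    Tendsto (fun n => ∫ x, f n x ∂μ) atTop (𝓝 (∫ x, g x ∂μ)) := by
  have hγ0 : 0 < γ := one_pos.trans hγ
  have eLpNorm_le (n : ℕ) : eLpNorm (f n) (ENNReal.ofReal γ) μ ≤ (M.toNNReal ^ γ⁻¹ : NNReal) := by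
    have h0 : 0 ≤ᵐ[μ] h n := (hfh n).mono fun x hx => (rpow_nonneg (abs_nonneg _) _).trans hx
    have lintegral_le : ∫⁻ x, ‖f n x‖ₑ ^ γ ∂μ ≤ ENNReal.ofReal M := calc
      ∫⁻ x, ‖f n x‖ₑ ^ γ ∂μ ≤ ∫⁻ x, ENNReal.ofReal (h n x) ∂μ := by
        refine lintegral_mono_ae ((hfh n).mono fun x hx => ?_)
        rw [enorm_eq_ofReal_abs, ENNReal.ofReal_rpow_of_nonneg (abs_nonneg _) hγ0.le]
        exact ENNReal.ofReal_le_ofReal hx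
      _ = ENNReal.ofReal (∫ x, h n x ∂μ) := (ofReal_integral_eq_lintegral_ofReal (hh n) h0).symm
      _ ≤ ENNReal.ofReal M := ENNReal.ofReal_le_ofReal (hM n)
    rw [eLpNorm_eq_lintegral_rpow_enorm_toReal (ENNReal.ofReal_pos.2 hγ0).ne' ENNReal.ofReal_ne_top,
      ENNReal.toReal_ofReal hγ0.le, one_div, ENNReal.coe_rpow_of_nonneg _ (inv_nonneg.2 hγ0.le)]
    exact ENNReal.rpow_le_rpow lintegral_le (inv_nonneg.2 hγ0.le)
  have unif : UnifIntegrable f 1 μ := unifIntegrable_of_eLpNorm_le one_ne_zero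
    (ENNReal.one_lt_ofReal.2 hγ) (fun n => (hf n).1) eLpNorm_le
  exact tendsto_integral_of_L1' g hg.1 (.of_forall hf) (tendsto_Lp_finite_of_tendsto_ae le_rfl
    ENNReal.one_ne_top (fun n => (hf n).1) (memLp_one_iff_integrable.2 hg) unif hlim)

lemma integral_pos_of_ae_pos {f : α → ℝ} [NeZero μ] (hf : Integrable f μ)
    (hpos : ∀ᵐ x ∂μ, 0 < f x) : 0 < ∫ x, f x ∂μ := by
  refine (integral_nonneg_of_ae (hpos.mono fun x hx => hx.le)).lt_of_ne fun h => ?_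
  have hzero := (integral_eq_zero_iff_of_nonneg_ae (hpos.mono fun x hx => hx.le) hf).1 h.symm
  obtain ⟨x, hx_pos, hx⟩ := (hpos.and hzero).exists
  exact hx_pos.ne' hx

lemma sq_integral_le_of_sq_le {h p q : α → ℝ} (hh : Integrable h μ) (hp : Integrable p μ)
    (hq : Integrable q μ) (hp0 : 0 ≤ᵐ[μ] p) (hq0 : 0 ≤ᵐ[μ] q)
    (hle : ∀ᵐ x ∂μ, h x ^ 2 ≤ p x * q x) :
    (∫ x, h x ∂μ) ^ 2 ≤ (∫ x, p x ∂μ) * ∫ x, q x ∂μ := by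
  have quadratic_nonneg (c : ℝ) :
      0 ≤ (∫ x, p x ∂μ) * (c * c) + (2 * ∫ x, h x ∂μ) * c + ∫ x, q x ∂μ := by
    rw [mul_right_comm, ← integral_mul_const, ← integral_const_mul]
    rw [← integral_add (hp.mul_const _) (hh.const_mul _)]
    refine (integral_nonneg_of_ae ?_).trans_eq
      (integral_add ((hp.mul_const _).add (hh.const_mul _)) hq)
    filter_upwards [hp0, hq0, hle] with x hpx hqx hx
    have cross_sq : (2 * c * h x) ^ 2 ≤ (p x * (c * c) + q x) ^ 2 := by
      nlinarith [sq_nonneg (p x * (c * c) - q x), mul_le_mul_of_nonneg_left hx (sq_nonneg c)]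
    have cross_ge := (abs_le_of_sq_le_sq' cross_sq
      (add_nonneg (mul_nonneg hpx (mul_self_nonneg c)) hqx)).1
    simp only [Pi.zero_apply]
    linarith
  have := discrim_le_zero quadratic_nonneg
  rw [discrim] at this
  linarith

lemma aemeasurable_comp_of_continuousOn {β : Type*} [TopologicalSpace β] [MeasurableSpace β]
    [BorelSpace β] {F : β → ℝ} {t : Set β} {u : α → β} (hF : ContinuousOn F t)
    (ht : MeasurableSet t) (hu : AEMeasurable u μ) (hut : ∀ᵐ x ∂μ, u x ∈ t) :
    AEMeasurable (fun x => F (u x)) μ := by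
  classical
  have piecewise_meas : Measurable (t.piecewise F 0) :=
    hF.measurable_piecewise continuousOn_const ht
  refine (piecewise_meas.comp_aemeasurable hu).congr ?_
  filter_upwards [hut] with x hx
  exact piecewise_eq_of_mem _ _ _ hx

end Integral

section ForwardConvex

variable {α : Type*} [MeasurableSpace α] {μ : Measure α} {f : ℕ → α → ℝ} {s : ℕ → Finset ℕ}
  {c : ℕ → ℕ → ℝ}

lemma integrable_sum_mul (hf : ∀ k, Integrable (f k) μ) (n : ℕ) :
    Integrable (fun x => ∑ k ∈ s n, c n k * f k x) μ :=
  integrable_finsetSum _ fun k _ => (hf k).const_mul _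

lemma integral_sum_mul (hf : ∀ k, Integrable (f k) μ) (n : ℕ) :
    ∫ x, ∑ k ∈ s n, c n k * f k x ∂μ = ∑ k ∈ s n, c n k * ∫ x, f k x ∂μ := by
  rw [integral_finsetSum _ fun k _ => (hf k).const_mul _]
  simp only [integral_const_mul]

lemma IsForwardConvex.ae_sum_mul_nonneg (hs : IsForwardConvex s c) (hf : ∀ k, 0 ≤ᵐ[μ] f k)
    (n : ℕ) : 0 ≤ᵐ[μ] fun x => ∑ k ∈ s n, c n k * f k x := by
  filter_upwards [ae_all_iff.2 hf] with x hx
  exact Finset.sum_nonneg fun k hk => mul_nonneg (hs.nonneg hk) (hx k)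

end ForwardConvex

/-! ### Stored energies and admissible deformations -/

local notation "vol₀₁" => Measure.restrict volume (Ioo (0 : ℝ) 1)

/-- The open orthant of tuples `(v₁, v₂, v₃, δ)` of principal stretches and determinant. -/
abbrev orthant : Set (ℝ × ℝ × ℝ × ℝ) := Ioi 0 ×ˢ Ioi 0 ×ˢ Ioi 0 ×ˢ Ioi 0

/-- `Φ` is represented by the convex integrand `g R (v₁, v₂, v₃, δ)`, where `g` itself, and not
only `Φ`, is coercive in `v₁` and blows up as `δ → 0`. The barrier `δ⁻¹ - 1` stands in for
`δ ^ (-s)` with any `s ≥ 1`. -/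
structure IsPolyconvexEnergy (Φ : ℝ → ℝ → ℝ → ℝ → ℝ) (g : ℝ → ℝ × ℝ × ℝ × ℝ → ℝ) (C γ K : ℝ) :
    Prop where
  C_pos : 0 < C
  one_lt : 1 < γ
  K_pos : 0 < K
  continuousOn : ContinuousOn (fun p : ℝ × ℝ × ℝ × ℝ × ℝ => g p.1 p.2) (Icc 0 1 ×ˢ orthant)
  convexOn : ∀ R ∈ Icc (0 : ℝ) 1, ConvexOn ℝ orthant (g R)
  eq : ∀ R ∈ Icc (0 : ℝ) 1, ∀ v1 ∈ Ioi (0 : ℝ), ∀ v2 ∈ Ioi (0 : ℝ), ∀ v3 ∈ Ioi (0 : ℝ),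
    Φ R v1 v2 v3 = g R (v1, v2, v3, v1 * v2 * v3)
  rpow_le : ∀ R ∈ Icc (0 : ℝ) 1, ∀ v ∈ orthant, C * v.1 ^ γ ≤ g R v
  barrier_le : ∀ R ∈ Icc (0 : ℝ) 1, ∀ v ∈ orthant, K * (v.2.2.2⁻¹ - 1) ≤ g R v

lemma inv_sub_one_le_rpow_neg {d s : ℝ} (hd : 0 < d) (hs : 1 ≤ s) : d⁻¹ - 1 ≤ d ^ (-s) := by
  rcases le_or_gt d 1 with hd1 | hd1
  · calc d⁻¹ - 1 ≤ d ^ (-1 : ℝ) := by rw [rpow_neg_one]; linarith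
      _ ≤ d ^ (-s) := rpow_le_rpow_of_exponent_ge hd hd1 (neg_le_neg hs)
  · exact (sub_nonpos.2 (inv_le_one_of_one_le₀ hd1.le)).trans (rpow_nonneg hd.le _)

lemma convex_orthant : Convex ℝ orthant :=
  (convex_Ioi 0).prod ((convex_Ioi 0).prod ((convex_Ioi 0).prod (convex_Ioi 0)))

lemma measurableSet_orthant : MeasurableSet orthant :=
  measurableSet_Ioi.prod (measurableSet_Ioi.prod (measurableSet_Ioi.prod measurableSet_Ioi))

lemma convexOn_orthant_rpow {C γ : ℝ} (hC : 0 ≤ C) (hγ : 1 ≤ γ) :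
    ConvexOn ℝ orthant fun v => C * v.1 ^ γ :=
  (((convexOn_rpow hγ).smul hC).comp_linearMap (LinearMap.fst ℝ ℝ (ℝ × ℝ × ℝ))).subset
    (fun _ hv => Ioi_subset_Ici_self hv.1) convex_orthant

lemma convexOn_orthant_inv_sub_one {K : ℝ} (hK : 0 ≤ K) :
    ConvexOn ℝ orthant fun v => K * (v.2.2.2⁻¹ - 1) := by
  have convexOn_inv : ConvexOn ℝ (Ioi 0) fun δ : ℝ => δ⁻¹ - 1 := by
    simpa only [zpow_neg_one, sub_eq_add_neg] using! (convexOn_zpow (𝕜 := ℝ) (-1)).add_const (-1)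
  let det : ℝ × ℝ × ℝ × ℝ →ₗ[ℝ] ℝ :=
    LinearMap.snd ℝ ℝ ℝ ∘ₗ LinearMap.snd ℝ ℝ (ℝ × ℝ) ∘ₗ LinearMap.snd ℝ ℝ (ℝ × ℝ × ℝ)
  exact ((convexOn_inv.smul hK).comp_linearMap det).subset (fun _ hv => hv.2.2.2) convex_orthant

lemma exists_isPolyconvexEnergy {Φ : ℝ → ℝ → ℝ → ℝ → ℝ} {g : ℝ → ℝ × ℝ × ℝ × ℝ → ℝ}
    {C γ K s : ℝ} (hC : 0 < C) (hγ : 1 < γ) (hK : 0 < K) (hs : 1 ≤ s)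
    (hgcont : ContinuousOn (fun p : ℝ × ℝ × ℝ × ℝ × ℝ => g p.1 p.2) (Icc 0 1 ×ˢ orthant))
    (hgconv : ∀ R ∈ Icc (0 : ℝ) 1, ConvexOn ℝ orthant (g R))
    (hpoly : ∀ R ∈ Icc (0 : ℝ) 1, ∀ v1 ∈ Ioi (0 : ℝ), ∀ v2 ∈ Ioi (0 : ℝ), ∀ v3 ∈ Ioi (0 : ℝ),
      Φ R v1 v2 v3 = g R (v1, v2, v3, v1 * v2 * v3))
    (hpow : ∀ R ∈ Icc (0 : ℝ) 1, ∀ v1 ∈ Ioi (0 : ℝ), ∀ v2 ∈ Ioi (0 : ℝ), ∀ v3 ∈ Ioi (0 : ℝ),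
      C * v1 ^ γ ≤ Φ R v1 v2 v3)
    (hdet : ∀ R ∈ Icc (0 : ℝ) 1, ∀ v1 ∈ Ioi (0 : ℝ), ∀ v2 ∈ Ioi (0 : ℝ), ∀ v3 ∈ Ioi (0 : ℝ),
      K * (v1 * v2 * v3) ^ (-s) ≤ Φ R v1 v2 v3) :
    ∃ g', IsPolyconvexEnergy Φ g' C γ K := by
  -- `g R` is tied to `Φ R` only where `δ = v₁ * v₂ * v₃`; the maximum is coercive everywhere.
  refine ⟨fun R v => g R v ⊔ (C * v.1 ^ γ ⊔ K * (v.2.2.2⁻¹ - 1)), hC, hγ, hK, ?_, ?_, ?_, ?_, ?_⟩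
  · refine hgcont.sup (.sup ?_ ?_)
    · exact continuousOn_const.mul
        (continuousOn_snd.fst.rpow_const fun p hp => .inr (one_pos.trans hγ).le)
    · refine continuousOn_const.mul (.sub (.inv₀ (by fun_prop) fun p hp => ?_) continuousOn_const)
      exact (show 0 < p.2.2.2.2 from hp.2.2.2.2).ne'
  · exact fun R hR => (hgconv R hR).sup ((convexOn_orthant_rpow hC.le hγ.le).sup
      (convexOn_orthant_inv_sub_one hK.le))
  · intro R hR v1 h1 v2 h2 v3 h3
    have hδ : 0 < v1 * v2 * v3 := mul_pos (mul_pos h1 h2) h3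
    rw [← hpoly R hR v1 h1 v2 h2 v3 h3, eq_comm, sup_eq_left, sup_le_iff]
    exact ⟨hpow R hR v1 h1 v2 h2 v3 h3, (mul_le_mul_of_nonneg_left
      (inv_sub_one_le_rpow_neg hδ hs) hK.le).trans (hdet R hR v1 h1 v2 h2 v3 h3)⟩
  · exact fun R _ v _ => le_sup_left.trans le_sup_right
  · exact fun R _ v _ => le_sup_right.trans le_sup_right

/-- The principal stretches and the determinant of the radial deformation `r` at radius `R`. -/
noncomputable def strain (r r' : ℝ → ℝ) (R : ℝ) : ℝ × ℝ × ℝ × ℝ :=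
  (r' R, r R / R, r R / R, r' R * (r R / R) * (r R / R))

/-- The integrand of `Imec`. -/
noncomputable def energyDensity (Φ : ℝ → ℝ → ℝ → ℝ → ℝ) (r r' : ℝ → ℝ) (R : ℝ) : ℝ :=
  Φ R (r' R) (r R / R) (r R / R) * R ^ 2

lemma strain_mem_orthant {r r' : ℝ → ℝ} {R : ℝ} (hR : 0 < R) (hr : 0 < r R) (hr' : 0 < r' R) :
    strain r r' R ∈ orthant := by
  have hv : 0 < r R / R := div_pos hr hR
  exact ⟨hr', hv, hv, mul_pos (mul_pos hr' hv) hv⟩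

namespace IsPolyconvexEnergy

variable {Φ : ℝ → ℝ → ℝ → ℝ → ℝ} {g : ℝ → ℝ × ℝ × ℝ × ℝ → ℝ} {C γ K R : ℝ} {r r' : ℝ → ℝ}
  {v : ℝ × ℝ × ℝ × ℝ}

lemma nonneg (hΦ : IsPolyconvexEnergy Φ g C γ K) (hR : R ∈ Icc 0 1) (hv : v ∈ orthant) :
    0 ≤ g R v :=
  (mul_nonneg hΦ.C_pos.le (rpow_nonneg (le_of_lt hv.1) γ)).trans (hΦ.rpow_le R hR v hv)

lemma energyDensity_eq (hΦ : IsPolyconvexEnergy Φ g C γ K) (hR : R ∈ Ioo 0 1) (hr : 0 < r R)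
    (hr' : 0 < r' R) : energyDensity Φ r r' R = g R (strain r r' R) * R ^ 2 := by
  have hv : 0 < r R / R := div_pos hr hR.1
  rw [energyDensity, hΦ.eq R (Ioo_subset_Icc_self hR) _ hr' _ hv _ hv, strain]

lemma energyDensity_nonneg (hΦ : IsPolyconvexEnergy Φ g C γ K) (hR : R ∈ Ioo 0 1) (hr : 0 < r R)
    (hr' : 0 < r' R) : 0 ≤ energyDensity Φ r r' R := by
  rw [hΦ.energyDensity_eq hR hr hr']
  exact mul_nonneg (hΦ.nonneg (Ioo_subset_Icc_self hR) (strain_mem_orthant hR.1 hr hr'))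
    (sq_nonneg R)

lemma barrier_le_energyDensity (hΦ : IsPolyconvexEnergy Φ g C γ K) (hR : R ∈ Ioo 0 1)
    (hr : 0 < r R) (hr' : 0 < r' R) :
    K * ((r' R * (r R / R) * (r R / R))⁻¹ - 1) * R ^ 2 ≤ energyDensity Φ r r' R := by
  rw [hΦ.energyDensity_eq hR hr hr']
  exact mul_le_mul_of_nonneg_right (hΦ.barrier_le R (Ioo_subset_Icc_self hR) _
    (strain_mem_orthant hR.1 hr hr')) (sq_nonneg R)

lemma aestronglyMeasurable_energyDensity (hΦ : IsPolyconvexEnergy Φ g C γ K)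
    (hr : AEMeasurable r vol₀₁) (hr' : AEMeasurable r' vol₀₁) (hr0 : ∀ᵐ R ∂vol₀₁, 0 < r R)
    (hr'0 : ∀ᵐ R ∂vol₀₁, 0 < r' R) : AEStronglyMeasurable (energyDensity Φ r r') vol₀₁ := by
  have hdiv : AEMeasurable (fun R => r R / R) vol₀₁ := hr.div aemeasurable_id
  have strain_meas : AEMeasurable (fun R => (R, strain r r' R)) vol₀₁ :=
    aemeasurable_id.prodMk (hr'.prodMk (hdiv.prodMk (hdiv.prodMk ((hr'.mul hdiv).mul hdiv))))
  have g_meas : AEMeasurable (fun R => g R (strain r r' R)) vol₀₁ :=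
    aemeasurable_comp_of_continuousOn hΦ.continuousOn
      (measurableSet_Icc.prod measurableSet_orthant) strain_meas (by
        filter_upwards [hr0, hr'0, ae_restrict_mem measurableSet_Ioo] with R h h' hR
        exact ⟨Ioo_subset_Icc_self hR, strain_mem_orthant hR.1 h h'⟩)
  refine (g_meas.mul (aemeasurable_id.pow_const 2)).aestronglyMeasurable.congr ?_
  filter_upwards [hr0, hr'0, ae_restrict_mem measurableSet_Ioo] with R h h' hR
  exact (hΦ.energyDensity_eq hR h h').symm

end IsPolyconvexEnergy

lemma integrable_sq_Ioo_zero_one : Integrable (fun t : ℝ => t ^ 2) vol₀₁ :=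
  (continuous_pow 2).integrableOn_Icc.mono_set Ioo_subset_Icc_self

lemma setIntegral_sq_Ioo_zero {x : ℝ} (hx : 0 ≤ x) : ∫ t in Ioo 0 x, t ^ 2 = x ^ 3 / 3 := by
  rw [← integral_Ioc_eq_integral_Ioo, ← intervalIntegral.integral_of_le hx, integral_pow]
  norm_num

namespace Adm

variable {Φ : ℝ → ℝ → ℝ → ℝ → ℝ} {lam : ℝ} {r r' : ℝ → ℝ}

lemma intervalIntegrable_deriv (h : Adm Φ lam r r') {a b : ℝ} (ha : a ∈ Icc 0 1)
    (hb : b ∈ Icc 0 1) : IntervalIntegrable r' volume a b :=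
  h.1.mono_set (uIcc_subset_uIcc (Icc_subset_uIcc ha) (Icc_subset_uIcc hb))

lemma integrable_deriv (h : Adm Φ lam r r') : Integrable r' vol₀₁ :=
  (intervalIntegrable_iff_integrableOn_Ioo_of_le zero_le_one).1 h.1

lemma ae_deriv_pos (h : Adm Φ lam r r') : ∀ᵐ R ∂vol₀₁, 0 < r' R :=
  h.2.2.1

lemma apply_one (h : Adm Φ lam r r') : r 1 = lam :=
  h.2.2.2.1

lemma apply_zero_nonneg (h : Adm Φ lam r r') : 0 ≤ r 0 :=
  h.2.2.2.2.1

lemma integrable_energyDensity (h : Adm Φ lam r r') : Integrable (energyDensity Φ r r') vol₀₁ :=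
  h.2.2.2.2.2

lemma sub_eq_integral (h : Adm Φ lam r r') {a b : ℝ} (ha : a ∈ Icc 0 1) (hb : b ∈ Icc 0 1) :
    r b - r a = ∫ t in a..b, r' t := by
  have h0 : (0 : ℝ) ∈ Icc 0 1 := left_mem_Icc.2 zero_le_one
  rw [h.2.1 a ha, h.2.1 b hb, add_sub_add_left_eq_sub]
  exact intervalIntegral.integral_interval_sub_left (h.intervalIntegrable_deriv h0 hb)
    (h.intervalIntegrable_deriv h0 ha)

lemma setIntegral_deriv (h : Adm Φ lam r r') {a b : ℝ} (ha : a ∈ Icc 0 1) (hb : b ∈ Icc 0 1)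
    (hab : a ≤ b) : ∫ t in Ioo a b, r' t = r b - r a := by
  rw [h.sub_eq_integral ha hb, intervalIntegral.integral_of_le hab, integral_Ioc_eq_integral_Ioo]

lemma strictMonoOn (h : Adm Φ lam r r') : StrictMonoOn r (Icc 0 1) := by
  intro a ha b hb hab
  rw [← sub_pos, ← h.setIntegral_deriv ha hb hab.le]
  have hsub : Ioo a b ⊆ Ioo 0 1 := Ioo_subset_Ioo ha.1 hb.2
  have : NeZero (volume.restrict (Ioo a b)) := ⟨by simp [hab]⟩
  exact integral_pos_of_ae_pos (IntegrableOn.mono_set h.integrable_deriv hsub)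
    (ae_restrict_of_ae_restrict_of_subset hsub h.ae_deriv_pos)

lemma mem_Icc (h : Adm Φ lam r r') {R : ℝ} (hR : R ∈ Icc 0 1) : r R ∈ Icc 0 lam := by
  have hmono := h.strictMonoOn.monotoneOn
  exact ⟨h.apply_zero_nonneg.trans (hmono (left_mem_Icc.2 zero_le_one) hR hR.1),
    (hmono hR (right_mem_Icc.2 zero_le_one) hR.2).trans_eq h.apply_one⟩

lemma pos (h : Adm Φ lam r r') {R : ℝ} (hR : R ∈ Ioo 0 1) : 0 < r R :=
  h.apply_zero_nonneg.trans_lt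
    (h.strictMonoOn (left_mem_Icc.2 zero_le_one) (Ioo_subset_Icc_self hR) hR.1)

lemma aemeasurable (h : Adm Φ lam r r') : AEMeasurable r vol₀₁ :=
  aemeasurable_restrict_of_monotoneOn measurableSet_Ioo
    (h.strictMonoOn.monotoneOn.mono Ioo_subset_Icc_self)

section Coercive

variable {g : ℝ → ℝ × ℝ × ℝ × ℝ → ℝ} {C γ K : ℝ}

lemma ae_energyDensity_nonneg (h : Adm Φ lam r r') (hΦ : IsPolyconvexEnergy Φ g C γ K) :
    0 ≤ᵐ[vol₀₁] energyDensity Φ r r' := by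
  filter_upwards [h.ae_deriv_pos, ae_restrict_mem measurableSet_Ioo] with R h' hR
  exact hΦ.energyDensity_nonneg hR (h.pos hR) h'

lemma Imec_nonneg (h : Adm Φ lam r r') (hΦ : IsPolyconvexEnergy Φ g C γ K) : 0 ≤ Imec Φ r r' :=
  integral_nonneg_of_ae (h.ae_energyDensity_nonneg hΦ)

lemma pow_four_le (h : Adm Φ lam r r') (hΦ : IsPolyconvexEnergy Φ g C γ K) {t x : ℝ}
    (ht : t ∈ Ioo 0 1) (hx : x ∈ Icc 0 1) (htx : t ≤ x) (hr' : 0 < r' t) :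
    t ^ 4 ≤ r' t * r x ^ 2 * (energyDensity Φ r r' t / K + t ^ 2) := by
  have ht0 : 0 < t := ht.1
  have hr : 0 < r t := h.pos ht
  have hrx : r t ≤ r x := h.strictMonoOn.monotoneOn (Ioo_subset_Icc_self ht) hx htx
  set δ := r' t * (r t / t) * (r t / t) with hδ
  have hδ_pos : 0 < δ := by positivity
  have hδ_le : δ * t ^ 2 ≤ r' t * r x ^ 2 := calc
    δ * t ^ 2 = r' t * r t ^ 2 := by rw [hδ]; field_simp
    _ ≤ r' t * r x ^ 2 := by gcongr
  have hδ_inv_le : δ⁻¹ * t ^ 2 ≤ energyDensity Φ r r' t / K + t ^ 2 := by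
    rw [← sub_le_iff_le_add, le_div_iff₀ hΦ.K_pos]
    linarith [hΦ.barrier_le_energyDensity ht hr hr']
  calc t ^ 4 = δ * t ^ 2 * (δ⁻¹ * t ^ 2) := by field_simp
    _ ≤ _ := mul_le_mul hδ_le hδ_inv_le (by positivity) (by positivity)

lemma integral_energyDensity_div_add_sq_le (h : Adm Φ lam r r') (K : ℝ) :
    ∫ t, (energyDensity Φ r r' t / K + t ^ 2) ∂vol₀₁ ≤ Imec Φ r r' / K + 1 := by
  rw [integral_add (h.integrable_energyDensity.div_const K) integrable_sq_Ioo_zero_one,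
    integral_div, setIntegral_sq_Ioo_zero zero_le_one]
  exact add_le_add le_rfl (by norm_num)

/-- Cauchy–Schwarz for `∫ t ^ 2` over `(0, x)`, with `t ^ 4` split as in `pow_four_le`. -/
lemma pow_six_le (h : Adm Φ lam r r') (hΦ : IsPolyconvexEnergy Φ g C γ K) {x : ℝ}
    (hx : x ∈ Ioo 0 1) : x ^ 6 ≤ 9 * (Imec Φ r r' / K + 1) * r x ^ 3 := by
  have hxI : x ∈ Icc 0 1 := Ioo_subset_Icc_self hx
  have hle : volume.restrict (Ioo 0 x) ≤ vol₀₁ :=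
    Measure.restrict_mono_set _ (Ioo_subset_Ioo_right hx.2.le)
  have energy_int : Integrable (fun t => energyDensity Φ r r' t / K + t ^ 2) vol₀₁ :=
    (h.integrable_energyDensity.div_const K).add integrable_sq_Ioo_zero_one
  have energy_nonneg : 0 ≤ᵐ[vol₀₁] fun t => energyDensity Φ r r' t / K + t ^ 2 :=
    (h.ae_energyDensity_nonneg hΦ).mono fun t ht =>
      add_nonneg (div_nonneg ht hΦ.K_pos.le) (sq_nonneg t)
  have integral_deriv_mul : ∫ t in Ioo 0 x, r' t * r x ^ 2 ≤ r x ^ 3 := by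
    rw [integral_mul_const, h.setIntegral_deriv (left_mem_Icc.2 zero_le_one) hxI hx.1.le,
      pow_succ' (r x) 2]
    gcongr
    exact sub_le_self _ h.apply_zero_nonneg
  have cauchy_schwarz : (∫ t in Ioo 0 x, t ^ 2) ^ 2 ≤ (∫ t in Ioo 0 x, r' t * r x ^ 2) *
      ∫ t in Ioo 0 x, (energyDensity Φ r r' t / K + t ^ 2) :=
    sq_integral_le_of_sq_le (integrable_sq_Ioo_zero_one.mono_measure hle)
      ((h.integrable_deriv.mono_measure hle).mul_const _) (energy_int.mono_measure hle)
      (ae_mono hle (h.ae_deriv_pos.mono fun t ht => by positivity)) (ae_mono hle energy_nonneg) (by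
        filter_upwards [ae_mono hle h.ae_deriv_pos, ae_restrict_mem measurableSet_Ioo]
          with t ht htx
        simpa only [← pow_mul] using h.pow_four_le hΦ ⟨htx.1, htx.2.trans hx.2⟩ hxI htx.2.le ht)
  have : (x ^ 3 / 3) ^ 2 ≤ r x ^ 3 * (Imec Φ r r' / K + 1) := by
    rw [← setIntegral_sq_Ioo_zero hx.1.le]
    exact cauchy_schwarz.trans (mul_le_mul integral_deriv_mul
      ((integral_mono_measure hle energy_nonneg energy_int).trans
        (h.integral_energyDensity_div_add_sq_le K))
      (integral_nonneg_of_ae (ae_mono hle energy_nonneg)) (pow_nonneg (h.pos hx).le 3))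
  linarith

end Coercive

end Adm

lemma adm_mul_id {Φ : ℝ → ℝ → ℝ → ℝ → ℝ} {g : ℝ → ℝ × ℝ × ℝ × ℝ → ℝ} {C γ K lam : ℝ}
    (hΦ : IsPolyconvexEnergy Φ g C γ K) (hlam : 0 < lam) :
    Adm Φ lam (fun R => lam * R) fun _ => lam := by
  refine ⟨intervalIntegrable_const, fun x _ => by simp [mul_comm], .of_forall fun _ => hlam,
    mul_one lam, by simp, ?_⟩
  have g_cont : ContinuousOn (fun R => g R (lam, lam, lam, lam * lam * lam) * R ^ 2) (Icc 0 1) := by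
    refine (hΦ.continuousOn.comp (f := fun R => (R, lam, lam, lam, lam * lam * lam))
      (by fun_prop) fun R hR => ?_).mul (continuousOn_pow 2)
    exact ⟨hR, hlam, hlam, hlam, mul_pos (mul_pos hlam hlam) hlam⟩
  refine (g_cont.integrableOn_Icc.mono_set Ioo_subset_Icc_self).congr_fun (fun R hR => ?_)
    measurableSet_Ioo
  simp only [mul_div_cancel_right₀ lam hR.1.ne',
    hΦ.eq R (Ioo_subset_Icc_self hR) _ hlam _ hlam _ hlam]

/-! ### The gravitational potential -/

section Potential

variable {ρ0 : ℝ → ℝ} {k1 : ℝ}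

lemma abs_mul_sq_le (hρ : ∀ R ∈ Icc (0 : ℝ) 1, |ρ0 R| ≤ k1) {u : ℝ} (hu : u ∈ Icc 0 1) :
    |ρ0 u * u ^ 2| ≤ k1 := by
  rw [abs_mul, abs_of_nonneg (sq_nonneg u)]
  exact (mul_le_of_le_one_right (abs_nonneg _) (pow_le_one₀ hu.1 hu.2)).trans (hρ u hu)

lemma abs_Mfun_le (hρ : ∀ R ∈ Icc (0 : ℝ) 1, |ρ0 R| ≤ k1) {R : ℝ} (hR : R ∈ Icc 0 1) :
    |Mfun ρ0 R| ≤ 4 * π * k1 := by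
  have hk1 : 0 ≤ k1 := (abs_nonneg _).trans (hρ R hR)
  have integrand_le : ∀ u ∈ uIoc 0 R, ‖ρ0 u * u ^ 2‖ ≤ k1 := by
    intro u hu
    rw [uIoc_of_le hR.1] at hu
    exact abs_mul_sq_le hρ ⟨hu.1.le, hu.2.trans hR.2⟩
  rw [Mfun, abs_mul, abs_of_pos (by positivity : 0 < 4 * π)]
  gcongr
  refine (intervalIntegral.norm_integral_le_of_norm_le_const integrand_le).trans
    (mul_le_of_le_one_right hk1 ?_)
  rw [sub_zero, abs_of_nonneg hR.1]
  exact hR.2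

lemma aestronglyMeasurable_Mfun (hρmeas : Measurable ρ0) (hρ : ∀ R ∈ Icc (0 : ℝ) 1, |ρ0 R| ≤ k1) :
    AEStronglyMeasurable (Mfun ρ0) vol₀₁ := by
  have integrand_int : IntegrableOn (fun u => ρ0 u * u ^ 2) (uIcc 0 1) := by
    rw [uIcc_of_le zero_le_one]
    exact Measure.integrableOn_of_bounded (M := k1) (by simp) (by fun_prop)
      ((ae_restrict_mem measurableSet_Icc).mono fun u hu => abs_mul_sq_le hρ hu)
  have primitive_cont := intervalIntegral.continuousOn_primitive_interval integrand_int
  rw [uIcc_of_le zero_le_one] at primitive_cont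
  exact ((continuousOn_const.mul primitive_cont).mono Ioo_subset_Icc_self).aestronglyMeasurable
    measurableSet_Ioo

lemma le_add_div_sq_of_pow_three_le {t A B : ℝ} (ht : 0 ≤ t) (hA : 0 < A) (h : t ^ 3 ≤ B) :
    t ≤ A + B / A ^ 2 := by
  have hB : 0 ≤ B := (pow_nonneg ht 3).trans h
  rcases le_total t A with htA | hAt
  · exact htA.trans (le_add_of_nonneg_right (by positivity))
  · refine le_add_of_nonneg_of_le hA.le ((le_div_iff₀ (by positivity)).2 ?_)
    calc t * A ^ 2 ≤ t * t ^ 2 := by gcongr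
      _ = t ^ 3 := by ring
      _ ≤ B := h

variable {Φ : ℝ → ℝ → ℝ → ℝ → ℝ} {g : ℝ → ℝ × ℝ × ℝ × ℝ → ℝ} {lam C γ K A : ℝ} {r r' : ℝ → ℝ}

lemma Adm.abs_potential_le (h : Adm Φ lam r r') (hΦ : IsPolyconvexEnergy Φ g C γ K)
    (hρ : ∀ R ∈ Icc (0 : ℝ) 1, |ρ0 R| ≤ k1) (hA : 0 < A) {R : ℝ} (hR : R ∈ Ioo 0 1) :
    |ρ0 R * Mfun ρ0 R * (r R)⁻¹ * R ^ 2| ≤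
      4 * π * k1 ^ 2 * (A + 9 * (Imec Φ r r' / K + 1) / A ^ 2) := by
  have hRI : R ∈ Icc 0 1 := Ioo_subset_Icc_self hR
  have hr : 0 < r R := h.pos hR
  have hk1 : 0 ≤ k1 := (abs_nonneg _).trans (hρ R hRI)
  have pow_three_le : ((r R)⁻¹ * R ^ 2) ^ 3 ≤ 9 * (Imec Φ r r' / K + 1) := calc
    ((r R)⁻¹ * R ^ 2) ^ 3 = R ^ 6 / r R ^ 3 := by field_simp
    _ ≤ _ := (div_le_iff₀ (by positivity)).2 (h.pow_six_le hΦ hR)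
  have sq_div_nonneg : 0 ≤ (r R)⁻¹ * R ^ 2 := by positivity
  calc |ρ0 R * Mfun ρ0 R * (r R)⁻¹ * R ^ 2|
      = |ρ0 R| * |Mfun ρ0 R| * ((r R)⁻¹ * R ^ 2) := by
        rw [mul_assoc, abs_mul, abs_mul, abs_of_nonneg sq_div_nonneg]
    _ ≤ k1 * (4 * π * k1) * (A + 9 * (Imec Φ r r' / K + 1) / A ^ 2) := by
        gcongr
        · exact hρ R hRI
        · exact abs_Mfun_le hρ hRI
        · exact le_add_div_sq_of_pow_three_le sq_div_nonneg hA pow_three_le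
    _ = _ := by ring

lemma Adm.abs_Ipot_le (h : Adm Φ lam r r') (hΦ : IsPolyconvexEnergy Φ g C γ K)
    (hρ : ∀ R ∈ Icc (0 : ℝ) 1, |ρ0 R| ≤ k1) (hA : 0 < A) :
    |Ipot ρ0 r| ≤ 4 * π * k1 ^ 2 * (A + 9 * (Imec Φ r r' / K + 1) / A ^ 2) := by
  simpa [Ipot] using norm_setIntegral_le_of_norm_le_const (μ := volume) (by simp)
    fun R hR => (Real.norm_eq_abs _).trans_le (h.abs_potential_le hΦ hρ hA hR)

lemma exists_forall_Adm_half_Imec_sub_le_Ifun (hΦ : IsPolyconvexEnergy Φ g C γ K)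
    (hρ : ∀ R ∈ Icc (0 : ℝ) 1, |ρ0 R| ≤ k1) :
    ∃ c, ∀ lam r r', Adm Φ lam r r' → Imec Φ r r' / 2 - c ≤ Ifun Φ ρ0 r r' := by
  have hK := hΦ.K_pos
  set P := 4 * π * k1 ^ 2
  have hP : 0 ≤ P := by positivity
  set A := 18 * P / K + 1 with hA
  have hA1 : 1 ≤ A := le_add_of_nonneg_left (by positivity)
  have coeff_le : 9 * P / (K * A ^ 2) ≤ 1 / 2 := by
    rw [div_le_iff₀ (by positivity)]
    have : K * A = 18 * P + K := by rw [hA]; field_simp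
    nlinarith [mul_le_mul_of_nonneg_left hA1 (by positivity : 0 ≤ K * A)]
  refine ⟨P * (A + 9 / A ^ 2), fun lam r r' h => ?_⟩
  have Ipot_le := (le_abs_self _).trans (h.abs_Ipot_le hΦ hρ (one_pos.trans_le hA1))
  have bound_eq : P * (A + 9 * (Imec Φ r r' / K + 1) / A ^ 2) =
      9 * P / (K * A ^ 2) * Imec Φ r r' + P * (A + 9 / A ^ 2) := by
    field_simp
    ring
  rw [Ifun]
  linarith [mul_le_mul_of_nonneg_right coeff_le (h.Imec_nonneg hΦ)]

lemma tendsto_Ipot (hΦ : IsPolyconvexEnergy Φ g C γ K) (hρmeas : Measurable ρ0)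
    (hρ : ∀ R ∈ Icc (0 : ℝ) 1, |ρ0 R| ≤ k1) {r r' : ℕ → ℝ → ℝ} {r₀ : ℝ → ℝ} {E : ℝ}
    (h : ∀ k, Adm Φ lam (r k) (r' k)) (hE : ∀ k, Imec Φ (r k) (r' k) ≤ E)
    (hlim : ∀ᵐ R ∂vol₀₁, Tendsto (fun k => r k R) atTop (𝓝 (r₀ R))) :
    Tendsto (fun k => Ipot ρ0 (r k)) atTop (𝓝 (Ipot ρ0 r₀)) := by
  have hK := hΦ.K_pos
  refine tendsto_integral_of_dominated_convergence
    (fun _ => 4 * π * k1 ^ 2 * (1 + 9 * (E / K + 1) / 1 ^ 2)) (fun k => ?_)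
    (integrable_const _) (fun k => ?_) ?_
  · exact ((hρmeas.aestronglyMeasurable.mul (aestronglyMeasurable_Mfun hρmeas hρ)).mul
      (h k).aemeasurable.inv.aestronglyMeasurable).mul (by fun_prop)
  · filter_upwards [ae_restrict_mem measurableSet_Ioo] with R hR
    refine ((h k).abs_potential_le hΦ hρ one_pos hR).trans ?_
    gcongr
    exact hE k
  · filter_upwards [hlim, ae_restrict_mem measurableSet_Ioo] with R hlimR hR
    have lower : R ^ 6 ≤ 9 * (E / K + 1) * r₀ R ^ 3 :=
      ge_of_tendsto' ((hlimR.pow 3).const_mul _) fun k => by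
        refine ((h k).pow_six_le hΦ hR).trans ?_
        have := (h k).pos hR
        gcongr
        exact hE k
    have r₀_ne : r₀ R ≠ 0 := by
      intro h0
      rw [h0] at lower
      exact (pow_pos hR.1 6).not_ge (by simpa using lower)
    exact ((hlimR.inv₀ r₀_ne).const_mul _).mul_const _

end Potential

/-! ### Lower semicontinuity of the mechanical energy -/

section Pointwise

variable {Φ : ℝ → ℝ → ℝ → ℝ → ℝ} {g : ℝ → ℝ × ℝ × ℝ × ℝ → ℝ} {C γ K R : ℝ} {r r' : ℕ → ℝ → ℝ}
  {r₀ F : ℝ → ℝ} {s : ℕ → Finset ℕ} {c : ℕ → ℕ → ℝ}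

lemma IsForwardConvex.tendsto_sum_smul_strain (hs : IsForwardConvex s c) (hr' : ∀ k, 0 ≤ r' k R)
    (hF : Tendsto (fun n => ∑ k ∈ s n, c n k * r' k R) atTop (𝓝 (F R)))
    (hr : Tendsto (fun k => r k R) atTop (𝓝 (r₀ R))) :
    Tendsto (fun n => ∑ k ∈ s n, c n k • strain (r k) (r' k) R) atTop (𝓝 (strain r₀ F R)) := by
  have stretch := hr.div_const R
  have sum_eq (n : ℕ) : ∑ k ∈ s n, c n k • strain (r k) (r' k) R =
      (∑ k ∈ s n, c n k * r' k R, ∑ k ∈ s n, c n k * (r k R / R), ∑ k ∈ s n, c n k * (r k R / R),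
        ∑ k ∈ s n, c n k * (r' k R * ((r k R / R) * (r k R / R)))) := by
    simp only [strain, Prod.ext_iff, Prod.fst_sum, Prod.snd_sum, Prod.smul_fst, Prod.smul_snd,
      smul_eq_mul, mul_assoc, and_self]
  rw [funext sum_eq, strain, mul_assoc]
  exact hF.prodMk_nhds ((hs.tendsto_sum_mul stretch).prodMk_nhds
    ((hs.tendsto_sum_mul stretch).prodMk_nhds
      (hs.tendsto_sum_mul_mul hr' hF (stretch.mul stretch))))

lemma IsForwardConvex.sum_smul_strain_mem_orthant (hs : IsForwardConvex s c) (hR : 0 < R)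
    (hr : ∀ k, 0 < r k R) (hr' : ∀ k, 0 < r' k R) (n : ℕ) :
    ∑ k ∈ s n, c n k • strain (r k) (r' k) R ∈ orthant :=
  convex_orthant.sum_mem (fun _ => hs.nonneg) (hs.sum_eq_one n)
    fun k _ => strain_mem_orthant hR (hr k) (hr' k)

namespace IsPolyconvexEnergy

lemma sum_smul_strain_mul_sq_le (hΦ : IsPolyconvexEnergy Φ g C γ K) (hs : IsForwardConvex s c)
    (hR : R ∈ Ioo 0 1) (hr : ∀ k, 0 < r k R) (hr' : ∀ k, 0 < r' k R) (n : ℕ) :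
    g R (∑ k ∈ s n, c n k • strain (r k) (r' k) R) * R ^ 2 ≤
      ∑ k ∈ s n, c n k * energyDensity Φ (r k) (r' k) R := by
  have jensen := (hΦ.convexOn R (Ioo_subset_Icc_self hR)).map_sum_le (fun _ => hs.nonneg)
    (hs.sum_eq_one n) fun k _ => strain_mem_orthant hR.1 (hr k) (hr' k)
  refine (mul_le_mul_of_nonneg_right jensen (sq_nonneg R)).trans_eq ?_
  rw [Finset.sum_mul]
  exact Finset.sum_congr rfl fun k _ => by
    rw [hΦ.energyDensity_eq hR (hr k) (hr' k), smul_eq_mul, mul_assoc]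

lemma det_ne_zero_of_liminf_lt_top (hΦ : IsPolyconvexEnergy Φ g C γ K) (hR : R ∈ Ioo 0 1)
    {v : ℕ → ℝ × ℝ × ℝ × ℝ} {w : ℝ × ℝ × ℝ × ℝ} {a : ℕ → ℝ} (hv : ∀ n, v n ∈ orthant)
    (hvw : Tendsto v atTop (𝓝 w)) (hva : ∀ n, g R (v n) * R ^ 2 ≤ a n)
    (ha : liminf (fun n => ENNReal.ofReal (a n)) atTop < ∞) : w.2.2.2 ≠ 0 := by
  intro hw
  have det_tendsto : Tendsto (fun n => (v n).2.2.2) atTop (𝓝[>] 0) :=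
    tendsto_nhdsWithin_iff.2 ⟨hw ▸ hvw.snd_nhds.snd_nhds.snd_nhds, .of_forall fun n => (hv n).2.2.2⟩
  have barrier_tendsto : Tendsto (fun n => K * ((v n).2.2.2⁻¹ - 1) * R ^ 2) atTop atTop :=
    ((tendsto_atTop_add_const_right _ (-1)
      (tendsto_inv_nhdsGT_zero.comp det_tendsto)).const_mul_atTop hΦ.K_pos).atTop_mul_const
        (pow_pos hR.1 2)
  have a_tendsto : Tendsto a atTop atTop := tendsto_atTop_mono (fun n =>
    (mul_le_mul_of_nonneg_right (hΦ.barrier_le R (Ioo_subset_Icc_self hR) _ (hv n))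
      (sq_nonneg R)).trans (hva n)) barrier_tendsto
  exact ha.ne (ENNReal.tendsto_ofReal_atTop.comp a_tendsto).liminf_eq

lemma ofReal_energyDensity_le_liminf (hΦ : IsPolyconvexEnergy Φ g C γ K) (hs : IsForwardConvex s c)
    (hR : R ∈ Ioo 0 1) (hr : ∀ k, 0 < r k R) (hr' : ∀ k, 0 < r' k R)
    (hF : Tendsto (fun n => ∑ k ∈ s n, c n k * r' k R) atTop (𝓝 (F R)))
    (hr₀ : Tendsto (fun k => r k R) atTop (𝓝 (r₀ R)))
    (hfin : liminf (fun n => ENNReal.ofReal (∑ k ∈ s n, c n k * energyDensity Φ (r k) (r' k) R))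
      atTop < ∞) :
    0 < r₀ R ∧ 0 < F R ∧ ENNReal.ofReal (energyDensity Φ r₀ F R) ≤
      liminf (fun n => ENNReal.ofReal (∑ k ∈ s n, c n k * energyDensity Φ (r k) (r' k) R))
        atTop := by
  set v := fun n => ∑ k ∈ s n, c n k • strain (r k) (r' k) R
  have v_mem : ∀ n, v n ∈ orthant := hs.sum_smul_strain_mem_orthant hR.1 hr hr'
  have v_tendsto : Tendsto v atTop (𝓝 (strain r₀ F R)) :=
    hs.tendsto_sum_smul_strain (fun k => (hr' k).le) hF hr₀
  have g_le := hΦ.sum_smul_strain_mul_sq_le hs hR hr hr'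
  have det_ne := hΦ.det_ne_zero_of_liminf_lt_top hR v_mem v_tendsto g_le hfin
  have F_pos : 0 < F R := lt_of_le_of_ne
    (ge_of_tendsto' v_tendsto.fst_nhds fun n => le_of_lt (v_mem n).1)
    fun h => det_ne (by simp [strain, ← h])
  have r₀_pos : 0 < r₀ R := lt_of_le_of_ne
    (ge_of_tendsto' hr₀ fun k => (hr k).le) fun h => det_ne (by simp [strain, ← h])
  have g_tendsto : Tendsto (fun n => g R (v n)) atTop (𝓝 (g R (strain r₀ F R))) := by
    have hRI : R ∈ Icc 0 1 := Ioo_subset_Icc_self hR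
    exact (hΦ.continuousOn (R, strain r₀ F R)
      ⟨hRI, strain_mem_orthant hR.1 r₀_pos F_pos⟩).tendsto.comp (tendsto_nhdsWithin_iff.2
        ⟨tendsto_const_nhds.prodMk_nhds v_tendsto, .of_forall fun n => ⟨hRI, v_mem n⟩⟩)
  refine ⟨r₀_pos, F_pos, ?_⟩
  rw [hΦ.energyDensity_eq hR r₀_pos F_pos,
    ← (ENNReal.tendsto_ofReal (g_tendsto.mul_const (R ^ 2))).liminf_eq]
  exact liminf_le_liminf (.of_forall fun n => ENNReal.ofReal_le_ofReal (g_le n))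

end IsPolyconvexEnergy

end Pointwise

/-- Admissible deformations `r k` converging a.e. to `r₀`, with forward convex combinations of
their derivatives converging a.e. to `F`: a substitute for weak convergence of the derivatives. -/
structure ForwardConverges (Φ : ℝ → ℝ → ℝ → ℝ → ℝ) (lam : ℝ) (r r' : ℕ → ℝ → ℝ) (r₀ F : ℝ → ℝ)
    (s : ℕ → Finset ℕ) (c : ℕ → ℕ → ℝ) : Prop where
  adm : ∀ k, Adm Φ lam (r k) (r' k)
  isForwardConvex : IsForwardConvex s c
  ae_tendsto : ∀ᵐ R ∂vol₀₁, Tendsto (fun k => r k R) atTop (𝓝 (r₀ R))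
  ae_tendsto_deriv : ∀ᵐ R ∂vol₀₁, Tendsto (fun n => ∑ k ∈ s n, c n k * r' k R) atTop (𝓝 (F R))

lemma exists_forwardConverges {Φ : ℝ → ℝ → ℝ → ℝ → ℝ} {lam : ℝ} {r r' : ℕ → ℝ → ℝ} {r₀ : ℝ → ℝ}
    (h : ∀ k, Adm Φ lam (r k) (r' k))
    (hr : ∀ᵐ R ∂vol₀₁, Tendsto (fun k => r k R) atTop (𝓝 (r₀ R))) :
    ∃ F s c, ForwardConverges Φ lam r r' r₀ F s c := by
  obtain ⟨s, c, F, hs, hF⟩ := exists_isForwardConvex_ae_tendsto (B := lam)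
    (fun k => (h k).integrable_deriv) (fun k => (h k).ae_deriv_pos.mono fun _ hR => hR.le)
    fun k => by
      rw [(h k).setIntegral_deriv (left_mem_Icc.2 zero_le_one) (right_mem_Icc.2 zero_le_one)
        zero_le_one, (h k).apply_one]
      exact sub_le_self _ (h k).apply_zero_nonneg
  exact ⟨F, s, c, h, hs, hr, hF⟩

namespace ForwardConverges

variable {Φ : ℝ → ℝ → ℝ → ℝ → ℝ} {g : ℝ → ℝ × ℝ × ℝ × ℝ → ℝ} {C γ K lam m : ℝ}
  {r r' : ℕ → ℝ → ℝ} {r₀ F : ℝ → ℝ} {s : ℕ → Finset ℕ} {c : ℕ → ℕ → ℝ}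

lemma tendsto_integral_sum_energyDensity (h : ForwardConverges Φ lam r r' r₀ F s c)
    (hm : Tendsto (fun k => Imec Φ (r k) (r' k)) atTop (𝓝 m)) :
    Tendsto (fun n => ∫ R, ∑ k ∈ s n, c n k * energyDensity Φ (r k) (r' k) R ∂vol₀₁) atTop
      (𝓝 m) := by
  simp only [integral_sum_mul fun k => (h.adm k).integrable_energyDensity]
  exact h.isForwardConvex.tendsto_sum_mul hm

lemma ae_pos_and_ofReal_le_liminf (h : ForwardConverges Φ lam r r' r₀ F s c)
    (hΦ : IsPolyconvexEnergy Φ g C γ K)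
    (hm : Tendsto (fun k => Imec Φ (r k) (r' k)) atTop (𝓝 m)) :
    ∀ᵐ R ∂vol₀₁, 0 < r₀ R ∧ 0 < F R ∧ ENNReal.ofReal (energyDensity Φ r₀ F R) ≤
      liminf (fun n => ENNReal.ofReal (∑ k ∈ s n, c n k * energyDensity Φ (r k) (r' k) R))
        atTop := by
  obtain ⟨B, hB⟩ := (h.tendsto_integral_sum_energyDensity hm).bddAbove_range
  have liminf_finite := ae_liminf_ofReal_lt_top
    (integrable_sum_mul fun k => (h.adm k).integrable_energyDensity)
    (h.isForwardConvex.ae_sum_mul_nonneg fun k => (h.adm k).ae_energyDensity_nonneg hΦ)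
    fun n => hB (mem_range_self n)
  filter_upwards [liminf_finite, h.ae_tendsto, h.ae_tendsto_deriv,
    ae_all_iff.2 fun k => (h.adm k).ae_deriv_pos, ae_restrict_mem measurableSet_Ioo]
    with R hfin hr hF hr' hR
  exact hΦ.ofReal_energyDensity_le_liminf h.isForwardConvex hR (fun k => (h.adm k).pos hR) hr' hF
    hr hfin

lemma aemeasurable_limit (h : ForwardConverges Φ lam r r' r₀ F s c) : AEMeasurable r₀ vol₀₁ :=
  aemeasurable_of_tendsto_metrizable_ae _ (fun k => (h.adm k).aemeasurable) h.ae_tendsto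

lemma aemeasurable_deriv_limit (h : ForwardConverges Φ lam r r' r₀ F s c) : AEMeasurable F vol₀₁ :=
  aemeasurable_of_tendsto_metrizable_ae _
    (fun n => (integrable_sum_mul (fun k => (h.adm k).integrable_deriv) n).aemeasurable)
    h.ae_tendsto_deriv

lemma integrable_energyDensity_and_integral_le (h : ForwardConverges Φ lam r r' r₀ F s c)
    (hΦ : IsPolyconvexEnergy Φ g C γ K)
    (hm : Tendsto (fun k => Imec Φ (r k) (r' k)) atTop (𝓝 m)) :
    Integrable (energyDensity Φ r₀ F) vol₀₁ ∧ Imec Φ r₀ F ≤ m := by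
  have ae_limit := h.ae_pos_and_ofReal_le_liminf hΦ hm
  have r₀_pos : ∀ᵐ R ∂vol₀₁, 0 < r₀ R := ae_limit.mono fun _ hR => hR.1
  have F_pos : ∀ᵐ R ∂vol₀₁, 0 < F R := ae_limit.mono fun _ hR => hR.2.1
  refine integrable_and_integral_le_of_ofReal_le_liminf
    (integrable_sum_mul fun k => (h.adm k).integrable_energyDensity)
    (h.isForwardConvex.ae_sum_mul_nonneg fun k => (h.adm k).ae_energyDensity_nonneg hΦ)
    (hΦ.aestronglyMeasurable_energyDensity h.aemeasurable_limit h.aemeasurable_deriv_limit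
      r₀_pos F_pos) ?_ (ae_limit.mono fun _ hR => hR.2.2)
    (ge_of_tendsto' hm fun k => (h.adm k).Imec_nonneg hΦ)
    (ENNReal.tendsto_ofReal (h.tendsto_integral_sum_energyDensity hm)).liminf_eq.le
  filter_upwards [r₀_pos, F_pos, ae_restrict_mem measurableSet_Ioo] with R hr hF hR
  exact hΦ.energyDensity_nonneg hR hr hF

lemma ae_deriv_limit_nonneg (h : ForwardConverges Φ lam r r' r₀ F s c) : 0 ≤ᵐ[vol₀₁] F := by
  filter_upwards [h.ae_tendsto_deriv, ae_all_iff.2 fun k => (h.adm k).ae_deriv_pos] with R hF hr'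
  exact ge_of_tendsto' hF fun n =>
    Finset.sum_nonneg fun k hk => mul_nonneg (h.isForwardConvex.nonneg hk) (hr' k).le

lemma setIntegral_sum_deriv (h : ForwardConverges Φ lam r r' r₀ F s c) {x : ℝ}
    (hx : x ∈ Icc 0 1) (n : ℕ) :
    ∫ t in Ioo x 1, ∑ k ∈ s n, c n k * r' k t = lam - ∑ k ∈ s n, c n k * r k x := by
  have hle : volume.restrict (Ioo x 1) ≤ vol₀₁ :=
    Measure.restrict_mono_set _ (Ioo_subset_Ioo_left hx.1)
  rw [integral_sum_mul fun k => (h.adm k).integrable_deriv.mono_measure hle]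
  have (k : ℕ) : ∫ t in Ioo x 1, r' k t = lam - r k x := by
    rw [(h.adm k).setIntegral_deriv hx (right_mem_Icc.2 zero_le_one) hx.2, (h.adm k).apply_one]
  simp only [this, mul_sub, Finset.sum_sub_distrib, ← Finset.sum_mul,
    h.isForwardConvex.sum_eq_one, one_mul]

lemma integrable_deriv_limit_and_integral_le (h : ForwardConverges Φ lam r r' r₀ F s c) :
    Integrable F vol₀₁ ∧ ∫ R, F R ∂vol₀₁ ≤ lam := by
  have hlam := (h.adm 0).mem_Icc (left_mem_Icc.2 zero_le_one)
  refine integrable_and_integral_le_of_ofReal_le_liminf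
    (integrable_sum_mul fun k => (h.adm k).integrable_deriv)
    (h.isForwardConvex.ae_sum_mul_nonneg fun k => (h.adm k).ae_deriv_pos.mono fun _ hR => hR.le)
    h.aemeasurable_deriv_limit.aestronglyMeasurable h.ae_deriv_limit_nonneg
    (h.ae_tendsto_deriv.mono fun R hR => (ENNReal.tendsto_ofReal hR).liminf_eq.ge)
    (hlam.1.trans hlam.2)
    (liminf_ofReal_le_of_forall_le fun n => ?_)
  rw [h.setIntegral_sum_deriv (left_mem_Icc.2 zero_le_one)]
  exact sub_le_self _ (Finset.sum_nonneg fun k hk =>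
    mul_nonneg (h.isForwardConvex.nonneg hk) (h.adm k).apply_zero_nonneg)

lemma ae_abs_sum_deriv_rpow_le (h : ForwardConverges Φ lam r r' r₀ F s c)
    (hΦ : IsPolyconvexEnergy Φ g C γ K) {x : ℝ} (hx : 0 < x) (n : ℕ) :
    ∀ᵐ t ∂volume.restrict (Ioo x 1), |∑ k ∈ s n, c n k * r' k t| ^ γ ≤
      (∑ k ∈ s n, c n k * energyDensity Φ (r k) (r' k) t) / (C * x ^ 2) := by
  have hs := h.isForwardConvex
  have hC := hΦ.C_pos
  have hsub : Ioo x 1 ⊆ Ioo 0 1 := Ioo_subset_Ioo_left hx.le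
  filter_upwards [ae_restrict_mem measurableSet_Ioo, ae_restrict_of_ae_restrict_of_subset hsub
    (ae_all_iff.2 fun k => (h.adm k).ae_deriv_pos)] with t ht hr'
  have hr (k : ℕ) : 0 < r k t := (h.adm k).pos (hsub ht)
  have v_mem := hs.sum_smul_strain_mem_orthant (hsub ht).1 hr hr' n
  have v_fst : (∑ k ∈ s n, c n k • strain (r k) (r' k) t).1 = ∑ k ∈ s n, c n k * r' k t := by
    simp [Prod.fst_sum, strain]
  have avg_pos : 0 < ∑ k ∈ s n, c n k * r' k t := v_fst ▸ v_mem.1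
  rw [abs_of_pos avg_pos, le_div_iff₀' (by positivity)]
  calc C * x ^ 2 * (∑ k ∈ s n, c n k * r' k t) ^ γ
      ≤ C * t ^ 2 * (∑ k ∈ s n, c n k * r' k t) ^ γ := by
        have := ht.1.le
        gcongr
    _ = C * (∑ k ∈ s n, c n k • strain (r k) (r' k) t).1 ^ γ * t ^ 2 := by rw [v_fst]; ring
    _ ≤ g t (∑ k ∈ s n, c n k • strain (r k) (r' k) t) * t ^ 2 := by
        gcongr
        exact hΦ.rpow_le t (Ioo_subset_Icc_self (hsub ht)) _ v_mem
    _ ≤ _ := hΦ.sum_smul_strain_mul_sq_le hs (hsub ht) hr hr' n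

lemma setIntegral_deriv_limit (h : ForwardConverges Φ lam r r' r₀ F s c)
    (hΦ : IsPolyconvexEnergy Φ g C γ K) (hF : Integrable F vol₀₁)
    (hm : Tendsto (fun k => Imec Φ (r k) (r' k)) atTop (𝓝 m)) {x : ℝ} (hx : x ∈ Ioo 0 1)
    (hr₀ : Tendsto (fun k => r k x) atTop (𝓝 (r₀ x))) : ∫ t in Ioo x 1, F t = lam - r₀ x := by
  have hle : volume.restrict (Ioo x 1) ≤ vol₀₁ :=
    Measure.restrict_mono_set _ (Ioo_subset_Ioo_left hx.1.le)
  obtain ⟨B, hB⟩ := (h.tendsto_integral_sum_energyDensity hm).bddAbove_range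
  have energy_int (n : ℕ) := integrable_sum_mul (s := s) (c := c)
    (fun k => (h.adm k).integrable_energyDensity) n
  have energy_le (n : ℕ) : ∫ t in Ioo x 1,
      (∑ k ∈ s n, c n k * energyDensity Φ (r k) (r' k) t) / (C * x ^ 2) ≤ B / (C * x ^ 2) := by
    rw [integral_div]
    have hC := hΦ.C_pos
    gcongr
    exact (integral_mono_measure hle (h.isForwardConvex.ae_sum_mul_nonneg
      (fun k => (h.adm k).ae_energyDensity_nonneg hΦ) n) (energy_int n)).trans
        (hB (mem_range_self n))
  refine tendsto_nhds_unique (tendsto_integral_of_rpow_le hΦ.one_lt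
    (integrable_sum_mul fun k => (h.adm k).integrable_deriv.mono_measure hle)
    (hF.mono_measure hle) (fun n => ((energy_int n).mono_measure hle).div_const _)
    (h.ae_abs_sum_deriv_rpow_le hΦ hx.1) energy_le (ae_mono hle h.ae_tendsto_deriv)) ?_
  simp only [h.setIntegral_sum_deriv (Ioo_subset_Icc_self hx)]
  exact (h.isForwardConvex.tendsto_sum_mul hr₀).const_sub lam

end ForwardConverges

theorem exists_adm_Imec_le_of_ae_tendsto {Φ : ℝ → ℝ → ℝ → ℝ → ℝ} {g : ℝ → ℝ × ℝ × ℝ × ℝ → ℝ}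
    {C γ K lam m : ℝ} {r r' : ℕ → ℝ → ℝ} {r₀ : ℝ → ℝ} (hΦ : IsPolyconvexEnergy Φ g C γ K)
    (h : ∀ k, Adm Φ lam (r k) (r' k))
    (hr : ∀ᵐ R ∂vol₀₁, Tendsto (fun k => r k R) atTop (𝓝 (r₀ R)))
    (hm : Tendsto (fun k => Imec Φ (r k) (r' k)) atTop (𝓝 m)) :
    ∃ rl rl', Adm Φ lam rl rl' ∧ rl =ᵐ[vol₀₁] r₀ ∧ Imec Φ rl rl' ≤ m := by
  obtain ⟨F, s, c, hF⟩ := exists_forwardConverges h hr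
  obtain ⟨F_int, integral_F_le⟩ := hF.integrable_deriv_limit_and_integral_le
  obtain ⟨energy_int, energy_le⟩ := hF.integrable_energyDensity_and_integral_le hΦ hm
  have F_interval (x : ℝ) (hx : x ∈ Icc 0 1) (y : ℝ) (hy : y ∈ Icc 0 1) :
      IntervalIntegrable F volume x y :=
    ((intervalIntegrable_iff_integrableOn_Ioo_of_le zero_le_one).2 F_int).mono_set
      (uIcc_subset_uIcc (Icc_subset_uIcc hx) (Icc_subset_uIcc hy))
  have h0 : (0 : ℝ) ∈ Icc 0 1 := left_mem_Icc.2 zero_le_one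
  have h1 : (1 : ℝ) ∈ Icc 0 1 := right_mem_Icc.2 zero_le_one
  set rl : ℝ → ℝ := fun x => lam - ∫ t in x..1, F t with hrl
  have rl_eq : rl =ᵐ[vol₀₁] r₀ := by
    filter_upwards [hr, ae_restrict_mem measurableSet_Ioo] with x hx hxI
    rw [hrl]
    beta_reduce
    rw [intervalIntegral.integral_of_le hxI.2.le, integral_Ioc_eq_integral_Ioo,
      hF.setIntegral_deriv_limit hΦ F_int hm hxI hx, sub_sub_cancel]
  have energy_eq : energyDensity Φ rl F =ᵐ[vol₀₁] energyDensity Φ r₀ F :=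
    rl_eq.mono fun x hx => by simp only [energyDensity, hx]
  refine ⟨rl, F, ⟨F_interval 0 h0 1 h1, fun x hx => ?_, ?_, by simp [hrl], ?_,
    energy_int.congr energy_eq.symm⟩, rl_eq, (integral_congr_ae energy_eq).trans_le energy_le⟩
  · have := intervalIntegral.integral_add_adjacent_intervals (F_interval 0 h0 x hx)
      (F_interval x hx 1 h1)
    simp only [hrl]
    linarith
  · exact (hF.ae_pos_and_ofReal_le_liminf hΦ hm).mono fun _ hR => hR.2.1
  · rw [← integral_Ioc_eq_integral_Ioo, ← intervalIntegral.integral_of_le zero_le_one]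
      at integral_F_le
    exact sub_nonneg.2 integral_F_le

/-! ### Existence of minimizers -/

lemma exists_subseq_ae_tendsto_of_adm {Φ : ℝ → ℝ → ℝ → ℝ → ℝ} {lam : ℝ} {r r' : ℕ → ℝ → ℝ}
    (h : ∀ k, Adm Φ lam (r k) (r' k)) :
    ∃ σ : ℕ → ℕ, ∃ r₀ : ℝ → ℝ, StrictMono σ ∧
      ∀ᵐ R ∂vol₀₁, Tendsto (fun k => r (σ k) R) atTop (𝓝 (r₀ R)) := by
  obtain ⟨σ, r₀, hσ, hr₀⟩ := exists_subseq_ae_tendsto_of_monotoneOn zero_le_one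
    (fun k => (h k).strictMonoOn.monotoneOn) fun k R hR => (h k).mem_Icc hR
  exact ⟨σ, r₀, hσ, ae_restrict_of_ae_restrict_of_subset Ioo_subset_Icc_self hr₀⟩

theorem exists_adm_Ifun_le_of_tendsto {Φ : ℝ → ℝ → ℝ → ℝ → ℝ} {g : ℝ → ℝ × ℝ × ℝ × ℝ → ℝ}
    {C γ K k1 lam i : ℝ} {ρ0 : ℝ → ℝ} {r r' : ℕ → ℝ → ℝ} (hΦ : IsPolyconvexEnergy Φ g C γ K)
    (hρmeas : Measurable ρ0) (hρ : ∀ R ∈ Icc (0 : ℝ) 1, |ρ0 R| ≤ k1)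
    (h : ∀ k, Adm Φ lam (r k) (r' k))
    (hi : Tendsto (fun k => Ifun Φ ρ0 (r k) (r' k)) atTop (𝓝 i)) :
    ∃ rl rl', Adm Φ lam rl rl' ∧ Ifun Φ ρ0 rl rl' ≤ i := by
  obtain ⟨c, hc⟩ := exists_forall_Adm_half_Imec_sub_le_Ifun hΦ hρ
  obtain ⟨B, hB⟩ := hi.bddAbove_range
  have Imec_le (k : ℕ) : Imec Φ (r k) (r' k) ≤ 2 * (B + c) := by
    linarith [hc lam _ _ (h k), hB (mem_range_self k)]
  obtain ⟨σ, r₀, hσ, hr₀⟩ := exists_subseq_ae_tendsto_of_adm h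
  have Ipot_tendsto : Tendsto (fun k => Ipot ρ0 (r (σ k))) atTop (𝓝 (Ipot ρ0 r₀)) :=
    tendsto_Ipot hΦ hρmeas hρ (fun k => h (σ k)) (fun k => Imec_le (σ k)) hr₀
  have Imec_tendsto : Tendsto (fun k => Imec Φ (r (σ k)) (r' (σ k))) atTop
      (𝓝 (i + Ipot ρ0 r₀)) := by
    simpa [Ifun] using (hi.comp hσ.tendsto_atTop).add Ipot_tendsto
  obtain ⟨rl, rl', hrl, hrl_eq, hrl_le⟩ :=
    exists_adm_Imec_le_of_ae_tendsto hΦ (fun k => h (σ k)) hr₀ Imec_tendsto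
  have Ipot_eq : Ipot ρ0 rl = Ipot ρ0 r₀ :=
    integral_congr_ae (hrl_eq.mono fun R hR => by simp only [hR])
  refine ⟨rl, rl', hrl, ?_⟩
  rw [Ifun, Ipot_eq]
  linarith

section Growth

variable {Φ : ℝ → ℝ → ℝ → ℝ → ℝ} {φ h : ℝ → ℝ}

lemma rpow_le_of_growth (hφpos : ∀ t ∈ Ioi (0 : ℝ), 0 < φ t) (hhpos : ∀ t ∈ Ioi (0 : ℝ), 0 < h t)
    (hG : ∀ R ∈ Icc (0 : ℝ) 1, ∀ v1 ∈ Ioi (0 : ℝ), ∀ v2 ∈ Ioi (0 : ℝ), ∀ v3 ∈ Ioi (0 : ℝ),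
      φ v1 + φ v2 + φ v3 + h (v1 * v2 * v3) ≤ Φ R v1 v2 v3)
    {C γ : ℝ} (hφ : ∀ v ∈ Ioi (0 : ℝ), C * v ^ γ ≤ φ v) :
    ∀ R ∈ Icc (0 : ℝ) 1, ∀ v1 ∈ Ioi (0 : ℝ), ∀ v2 ∈ Ioi (0 : ℝ), ∀ v3 ∈ Ioi (0 : ℝ),
      C * v1 ^ γ ≤ Φ R v1 v2 v3 := by
  intro R hR v1 h1 v2 h2 v3 h3
  have hdet : 0 < v1 * v2 * v3 := mul_pos (mul_pos h1 h2) h3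
  linarith [hG R hR v1 h1 v2 h2 v3 h3, hφ v1 h1, hφpos v2 h2, hφpos v3 h3, hhpos _ hdet]

lemma det_rpow_neg_le_of_growth (hφpos : ∀ t ∈ Ioi (0 : ℝ), 0 < φ t)
    (hG : ∀ R ∈ Icc (0 : ℝ) 1, ∀ v1 ∈ Ioi (0 : ℝ), ∀ v2 ∈ Ioi (0 : ℝ), ∀ v3 ∈ Ioi (0 : ℝ),
      φ v1 + φ v2 + φ v3 + h (v1 * v2 * v3) ≤ Φ R v1 v2 v3)
    {K s : ℝ} (hh : ∀ d ∈ Ioi (0 : ℝ), K * d ^ (-s) ≤ h d) :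
    ∀ R ∈ Icc (0 : ℝ) 1, ∀ v1 ∈ Ioi (0 : ℝ), ∀ v2 ∈ Ioi (0 : ℝ), ∀ v3 ∈ Ioi (0 : ℝ),
      K * (v1 * v2 * v3) ^ (-s) ≤ Φ R v1 v2 v3 := by
  intro R hR v1 h1 v2 h2 v3 h3
  have hdet : 0 < v1 * v2 * v3 := mul_pos (mul_pos h1 h2) h3
  linarith [hG R hR v1 h1 v2 h2 v3 h3, hφpos v1 h1, hφpos v2 h2, hφpos v3 h3, hh _ hdet]

lemma one_le_div_sub_one {γ : ℝ} (hγ : 1 < γ) : 1 ≤ γ / (γ - 1) :=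
  (one_le_div (sub_pos.2 hγ)).2 (sub_le_self γ zero_le_one)

end Growth

theorem stmt4_general {ρ0 : ℝ → ℝ} {k1 : ℝ} (hρmeas : Measurable ρ0)
    (hρ : ∀ R ∈ Icc (0 : ℝ) 1, |ρ0 R| ≤ k1) {Φ : ℝ → ℝ → ℝ → ℝ → ℝ}
    {g : ℝ → ℝ × ℝ × ℝ × ℝ → ℝ}
    (hgcont : ContinuousOn (fun p : ℝ × ℝ × ℝ × ℝ × ℝ => g p.1 p.2) (Icc 0 1 ×ˢ orthant))
    (hgconv : ∀ R ∈ Icc (0 : ℝ) 1, ConvexOn ℝ orthant (g R))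
    (hpoly : ∀ R ∈ Icc (0 : ℝ) 1, ∀ v1 ∈ Ioi (0 : ℝ), ∀ v2 ∈ Ioi (0 : ℝ), ∀ v3 ∈ Ioi (0 : ℝ),
      Φ R v1 v2 v3 = g R (v1, v2, v3, v1 * v2 * v3))
    {C γ K s : ℝ} (hC : 0 < C) (hγ : 1 < γ) (hK : 0 < K) (hs : 1 ≤ s)
    (hpow : ∀ R ∈ Icc (0 : ℝ) 1, ∀ v1 ∈ Ioi (0 : ℝ), ∀ v2 ∈ Ioi (0 : ℝ), ∀ v3 ∈ Ioi (0 : ℝ),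
      C * v1 ^ γ ≤ Φ R v1 v2 v3)
    (hdet : ∀ R ∈ Icc (0 : ℝ) 1, ∀ v1 ∈ Ioi (0 : ℝ), ∀ v2 ∈ Ioi (0 : ℝ), ∀ v3 ∈ Ioi (0 : ℝ),
      K * (v1 * v2 * v3) ^ (-s) ≤ Φ R v1 v2 v3) :
    ∀ lam > (0 : ℝ), ∃ rl rl' : ℝ → ℝ, Adm Φ lam rl rl' ∧
      ∀ r r' : ℝ → ℝ, Adm Φ lam r r' → Ifun Φ ρ0 rl rl' ≤ Ifun Φ ρ0 r r' := by
  intro lam hlam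
  obtain ⟨g', hΦ⟩ := exists_isPolyconvexEnergy hC hγ hK hs hgcont hgconv hpoly hpow hdet
  obtain ⟨c, hc⟩ := exists_forall_Adm_half_Imec_sub_le_Ifun hΦ hρ
  set energies := {i | ∃ r r', Adm Φ lam r r' ∧ Ifun Φ ρ0 r r' = i}
  have nonempty : energies.Nonempty := ⟨_, _, _, adm_mul_id hΦ hlam, rfl⟩
  have bddBelow : BddBelow energies := by
    refine ⟨-c, ?_⟩
    rintro _ ⟨r, r', h, rfl⟩
    linarith [hc lam r r' h, h.Imec_nonneg hΦ]
  obtain ⟨i, -, i_tendsto, i_mem⟩ := exists_seq_tendsto_sInf nonempty bddBelow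
  choose r r' h hi using i_mem
  obtain ⟨rl, rl', hrl, hrl_le⟩ :=
    exists_adm_Ifun_le_of_tendsto hΦ hρmeas hρ h (by simpa only [hi] using i_tendsto)
  exact ⟨rl, rl', hrl, fun r r' h => hrl_le.trans (csInf_le bddBelow ⟨r, r', h, rfl⟩)⟩

theorem stmt4 (ρ0 : ℝ → ℝ) (k0 k1 : ℝ) (hk0 : 0 < k0) (hρmeas : Measurable ρ0)
    (hρ : ∀ R ∈ Icc (0:ℝ) 1, k0 ≤ ρ0 R ∧ ρ0 R ≤ k1)
    (Φ : ℝ → ℝ → ℝ → ℝ → ℝ)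
    (hΦ0 : ∀ R ∈ Icc (0:ℝ) 1, ∀ v1 ∈ Ioi (0:ℝ), ∀ v2 ∈ Ioi (0:ℝ), ∀ v3 ∈ Ioi (0:ℝ),
      0 ≤ Φ R v1 v2 v3)
    (hΦsym : ∀ R ∈ Icc (0:ℝ) 1, ∀ v1 ∈ Ioi (0:ℝ), ∀ v2 ∈ Ioi (0:ℝ), ∀ v3 ∈ Ioi (0:ℝ),
      Φ R v1 v2 v3 = Φ R v2 v1 v3 ∧ Φ R v1 v2 v3 = Φ R v1 v3 v2)
    (hΦcont : ContinuousOn (fun p : ℝ × ℝ × ℝ × ℝ => Φ p.1 p.2.1 p.2.2.1 p.2.2.2)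
      (Icc 0 1 ×ˢ Ioi 0 ×ˢ Ioi 0 ×ˢ Ioi 0))
    -- polyconvexity: `Φ(R,v) = g(R,v₁,v₂,v₃,v₁v₂v₃)` with `g` continuous and convex
    -- in its last four arguments
    (g : ℝ → ℝ → ℝ → ℝ → ℝ → ℝ)
    (hgcont : ContinuousOn (fun p : ℝ × ℝ × ℝ × ℝ × ℝ => g p.1 p.2.1 p.2.2.1 p.2.2.2.1 p.2.2.2.2)
      (Icc 0 1 ×ˢ Ioi 0 ×ˢ Ioi 0 ×ˢ Ioi 0 ×ˢ Ioi 0))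
    (hgconv : ∀ R ∈ Icc (0:ℝ) 1,
      ConvexOn ℝ ((Ioi (0:ℝ)) ×ˢ (Ioi (0:ℝ)) ×ˢ (Ioi (0:ℝ)) ×ˢ (Ioi (0:ℝ)))
        (fun p : ℝ × ℝ × ℝ × ℝ => g R p.1 p.2.1 p.2.2.1 p.2.2.2))
    (hpoly : ∀ R ∈ Icc (0:ℝ) 1, ∀ v1 ∈ Ioi (0:ℝ), ∀ v2 ∈ Ioi (0:ℝ), ∀ v3 ∈ Ioi (0:ℝ),
      Φ R v1 v2 v3 = g R v1 v2 v3 (v1 * v2 * v3))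
    -- growth condition (G) with (H1)-(H3)
    (φ h : ℝ → ℝ)
    (hφpos : ∀ t ∈ Ioi (0:ℝ), 0 < φ t) (hhpos : ∀ t ∈ Ioi (0:ℝ), 0 < h t)
    (hφconv : StrictConvexOn ℝ (Ioi 0) φ) (hhconv : StrictConvexOn ℝ (Ioi 0) h)
    (hG : ∀ R ∈ Icc (0:ℝ) 1, ∀ v1 ∈ Ioi (0:ℝ), ∀ v2 ∈ Ioi (0:ℝ), ∀ v3 ∈ Ioi (0:ℝ),
      φ v1 + φ v2 + φ v3 + h (v1 * v2 * v3) ≤ Φ R v1 v2 v3)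
    (C γ : ℝ) (hC : 0 < C) (hγ1 : 1 < γ) (hγ3 : γ < 3)
    (hH1 : ∀ v ∈ Ioi (0:ℝ), C * v ^ γ ≤ φ v)
    (hH2 : Tendsto (fun d => h d / d) atTop atTop)
    (K s : ℝ) (hK : 0 < K) (hs : γ / (γ - 1) ≤ s)
    (hH3 : ∀ d ∈ Ioi (0:ℝ), K * d ^ (-s) ≤ h d) :
    ∀ lam > (0:ℝ), ∃ rl rl' : ℝ → ℝ, Adm Φ lam rl rl' ∧
      ∀ r r' : ℝ → ℝ, Adm Φ lam r r' → Ifun Φ ρ0 rl rl' ≤ Ifun Φ ρ0 r r' := by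
  exact stmt4_general (g := fun R v => g R v.1 v.2.1 v.2.2.1 v.2.2.2) hρmeas
    (fun R hR => abs_le.2 ⟨by linarith [hρ R hR], (hρ R hR).2⟩) hgcont hgconv hpoly hC hγ1 hK
    ((one_le_div_sub_one hγ1).trans hs) (rpow_le_of_growth hφpos hhpos hG hH1)
    (det_rpow_neg_le_of_growth hφpos hG hH3)
end

section
/- Let Φ:[0,1]×(0,∞)³→[0,∞) be C¹ and let r ∈ C¹((0,1)) satisfy r(R)>0, r'(R)>0 on (0,1), with R ↦ R²Φ_{,1}(R,r(R)) differentiable on (0,1) and satisfying the Euler–Lagrange equation d/dR[R² Φ_{,1}(R,r(R))] = 2R Φ_{,2}(R,r(R)) + R² ρ0(R) M_R / r(R)². Then the radial Cauchy stress T(R) := (R²/r(R)²) Φ_{,1}(R,r(R)) is differentiable on (0,1) with T'(R) = (2R²/r(R)³)[ (r(R)/R) Φ_{,2}(R,r(R)) − r'(R) Φ_{,1}(R,r(R)) ] + R² ρ0(R) M_R / r(R)⁴. In particular, if ρ0(R)>0 and the Baker–Ericksen inequality holds at R (i.e. r'(R)Φ_{,1}(R,r(R)) < (r(R)/R)Φ_{,2}(R,r(R))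 whenever r'(R) < r(R)/R), then T'(R)>0 at every R∈(0,1) with r'(R) < r(R)/R. -/
open MeasureTheory Real Set Filter

/-
The Euler–Lagrange equation prescribes the derivative of the numerator `N(S) = S² Φ_{,1}(S, r(S))`
of the stress `T = N / r²`, so `T' = N' / r² - 2 r' N / r³` can be evaluated without differentiating
`Φ_{,1}` itself, which need not be possible for a `C¹` energy. The two constitutive terms combine
into the Baker–Ericksen difference `(r / R) Φ_{,2} - r' Φ_{,1}`, and gravity contributes only a
nonnegative summand.
-/

/-- The radial Cauchy stress `T(R) = (R² / r(R)²) Φ_{,1}(R, r(R))` of the radial deformation `r`.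
The stored energy `Φ` is encoded by the function `P1 : R ↦ Φ_{,1}(R, r(R))`. -/
noncomputable def radialCauchyStress (r P1 : ℝ → ℝ) (R : ℝ) : ℝ := R ^ 2 / (r R) ^ 2 * P1 R

theorem radialCauchyStress_eq_div (r P1 : ℝ → ℝ) :
    radialCauchyStress r P1 = fun S => S ^ 2 * P1 S / (r S) ^ 2 :=
  funext fun _ => div_mul_eq_mul_div _ _ _

theorem Mfun_nonneg {ρ0 : ℝ → ℝ} {R : ℝ} (hR : 0 ≤ R) (hρ0 : ∀ u ∈ Icc 0 R, 0 ≤ ρ0 u) :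
    0 ≤ Mfun ρ0 R :=
  mul_nonneg (by positivity) <|
    intervalIntegral.integral_nonneg hR fun u hu => mul_nonneg (hρ0 u hu) (sq_nonneg u)

theorem sq_mul_mul_Mfun_nonneg {ρ0 : ℝ → ℝ} {R : ℝ} (hR : 0 ≤ R)
    (hρ0 : ∀ u ∈ Icc 0 R, 0 ≤ ρ0 u) :
    0 ≤ R ^ 2 * ρ0 R * Mfun ρ0 R :=
  mul_nonneg (mul_nonneg (sq_nonneg R) (hρ0 R (right_mem_Icc.mpr hR))) (Mfun_nonneg hR hρ0)

theorem hasDerivAt_div_sq {𝕜 𝕜' : Type*} [NontriviallyNormedField 𝕜] [NontriviallyNormedField 𝕜']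
    [NormedAlgebra 𝕜 𝕜'] {f g : 𝕜 → 𝕜'} {f' g' : 𝕜'} {x : 𝕜}
    (hf : HasDerivAt f f' x) (hg : HasDerivAt g g' x) (hgx : g x ≠ 0) :
    HasDerivAt (fun y => f y / g y ^ 2) (f' / g x ^ 2 - 2 * g' * f x / g x ^ 3) x := by
  refine (hf.fun_div (hg.fun_pow 2) (pow_ne_zero 2 hgx)).congr_deriv ?_
  push_cast
  field_simp

theorem hasDerivAt_radialCauchyStress {r P1 : ℝ → ℝ} {r' p2 b R : ℝ} (hR : R ≠ 0)
    (hrR : r R ≠ 0) (hr : HasDerivAt r r' R)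
    (hEL : HasDerivAt (fun S => S ^ 2 * P1 S) (2 * R * p2 + b / (r R) ^ 2) R) :
    HasDerivAt (radialCauchyStress r P1)
      (2 * R ^ 2 / (r R) ^ 3 * (r R / R * p2 - r' * P1 R) + b / (r R) ^ 4) R := by
  rw [radialCauchyStress_eq_div]
  refine (hasDerivAt_div_sq hEL hr hrR).congr_deriv ?_
  field_simp
  ring

theorem radialCauchyStress_rate_pos_of_bakerEricksen {R q r' p1 p2 b : ℝ} (hR : R ≠ 0)
    (hq : 0 < q) (hb : 0 ≤ b) (hBE : r' * p1 < q / R * p2) :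
    0 < 2 * R ^ 2 / q ^ 3 * (q / R * p2 - r' * p1) + b / q ^ 4 :=
  add_pos_of_pos_of_nonneg (mul_pos (by positivity) (sub_pos.mpr hBE)) (by positivity)

-- The source `b` is arbitrary; self-gravitation is the case `b R = R² ρ0(R) M_R`.
theorem stmt8_general {I : Set ℝ} {r r' P1 P2 b : ℝ → ℝ} (hI : ∀ R ∈ I, R ≠ 0)
    (hr : ∀ R ∈ I, HasDerivAt r (r' R) R) (hrpos : ∀ R ∈ I, 0 < r R)
    (hEL : ∀ R ∈ I,
      HasDerivAt (fun S => S ^ 2 * P1 S) (2 * R * P2 R + b R / (r R) ^ 2) R) :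
    (∀ R ∈ I,
      HasDerivAt (radialCauchyStress r P1)
        (2 * R ^ 2 / (r R) ^ 3 * (r R / R * P2 R - r' R * P1 R) + b R / (r R) ^ 4) R) ∧
    (∀ R ∈ I, 0 ≤ b R → r' R * P1 R < r R / R * P2 R →
      0 < 2 * R ^ 2 / (r R) ^ 3 * (r R / R * P2 R - r' R * P1 R) + b R / (r R) ^ 4) :=
  ⟨fun R hR => hasDerivAt_radialCauchyStress (hI R hR) (hrpos R hR).ne' (hr R hR) (hEL R hR),
    fun R hR =>
      radialCauchyStress_rate_pos_of_bakerEricksen (hI R hR) (hrpos R hR)⟩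

theorem stmt8 (ρ0 : ℝ → ℝ) (hρmeas : Measurable ρ0) (hρnn : ∀ u ∈ Icc (0:ℝ) 1, 0 ≤ ρ0 u)
    (r r' : ℝ → ℝ)
    -- `P1 R = Φ_{,1}(R, r(R))` and `P2 R = Φ_{,2}(R, r(R))`, i.e. the partial derivatives
    -- of the stored energy evaluated along the deformation
    (P1 P2 : ℝ → ℝ)
    -- `r ∈ C¹((0,1))` with `r > 0`, `r' > 0`
    (hr : ∀ R ∈ Ioo (0:ℝ) 1, HasDerivAt r (r' R) R)
    (hr'cont : ContinuousOn r' (Ioo (0:ℝ) 1))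
    (hrpos : ∀ R ∈ Ioo (0:ℝ) 1, 0 < r R) (hr'pos : ∀ R ∈ Ioo (0:ℝ) 1, 0 < r' R)
    -- `R ↦ R² Φ_{,1}(R,r(R))` is differentiable and satisfies the Euler--Lagrange equation
    (hEL : ∀ R ∈ Ioo (0:ℝ) 1,
      HasDerivAt (fun S => S ^ 2 * P1 S)
        (2 * R * P2 R + R ^ 2 * ρ0 R * Mfun ρ0 R / (r R) ^ 2) R) :
    -- the radial Cauchy stress `T(R) = (R²/r(R)²) P1 R` is differentiable with the
    -- asserted derivative
    (∀ R ∈ Ioo (0:ℝ) 1,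
      HasDerivAt (fun S => S ^ 2 / (r S) ^ 2 * P1 S)
        (2 * R ^ 2 / (r R) ^ 3 * (r R / R * P2 R - r' R * P1 R) +
          R ^ 2 * ρ0 R * Mfun ρ0 R / (r R) ^ 4) R) ∧
    -- positivity of `T'` under the Baker–Ericksen inequality
    (∀ R ∈ Ioo (0:ℝ) 1, 0 < ρ0 R →
      (r' R < r R / R → r' R * P1 R < r R / R * P2 R) →
      r' R < r R / R →
      0 < 2 * R ^ 2 / (r R) ^ 3 * (r R / R * P2 R - r' R * P1 R) +
            R ^ 2 * ρ0 R * Mfun ρ0 R / (r R) ^ 4) := by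
  obtain ⟨hderiv, hpos⟩ := stmt8_general (fun R hR => hR.1.ne') hr hrpos hEL
  exact ⟨hderiv, fun R hR _ hBE hlt => hpos R hR
    (sq_mul_mul_Mfun_nonneg hR.1.le fun u hu => hρnn u ⟨hu.1, hu.2.trans hR.2.le⟩) (hBE hlt)⟩
end
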